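/- arXiv:0705.3340 — 7 statements merged into one kernel-verified Lean document; each statement's English description precedes it below -/
import Mathlib

section
/- Let m ≥ 1 and N ≥ 1 be natural numbers, let ρ ∈ ℂ, and let u : ℝ^m \ {0} → ℂ be a smooth function satisfying S_ρ^N u = 0 on ℝ^m \ {0}. Then for every x ∈ ℝ^m \ {0} and every r > 0 one has u(r·x) = r^{-ρ} · Σ_{k=0}^{N-1} ((log r)^k / k!) · (S_ρ^k u)(x). -/
/-- The scaling operator `S_ρ` acting on functions on `ℝ^m`:
`(S_ρ u)(x) = Σ_i x_i ∂_i u(x) + ρ u(x)`. -/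
noncomputable def scalingOp (m : ℕ) (ρ : ℂ) (u : (Fin m → ℝ) → ℂ) : (Fin m → ℝ) → ℂ :=
  fun x => (∑ i : Fin m, (x i : ℂ) * fderiv ℝ u x (Pi.single i (1 : ℝ))) + ρ * u x

theorem taylor_deriv_aux (g : ℕ → ℝ → ℂ) (t : ℝ)
    (hg : ∀ k s, HasDerivAt (g k) (g (k + 1) s) s) (n : ℕ) (s : ℝ) :
    HasDerivAt (fun s : ℝ => ∑ k ∈ Finset.range (n + 1),
      ((t - s : ℝ) : ℂ) ^ k / (Nat.factorial k : ℂ) * g k s)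
      (((t - s : ℝ) : ℂ) ^ n / (Nat.factorial n : ℂ) * g (n + 1) s) s := by
  induction n with
  | zero => simpa using hg 0 s
  | succ n ih =>
    have h1 : HasDerivAt (fun s : ℝ => ((t - s : ℝ) : ℂ)) (-1) s := by
      have := ((hasDerivAt_id s).const_sub t).ofReal_comp
      simpa using this
    have h2 := ((h1.pow (n + 1)).div_const (Nat.factorial (n + 1) : ℂ)).mul (hg (n + 1) s)
    have h3 := ih.add h2
    have e : (fun s : ℝ => ∑ k ∈ Finset.range (n + 1 + 1),
      ((t - s : ℝ) : ℂ) ^ k / (Nat.factorial k : ℂ) * g k s) =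
      (fun s : ℝ => (∑ k ∈ Finset.range (n + 1),
      ((t - s : ℝ) : ℂ) ^ k / (Nat.factorial k : ℂ) * g k s) +
      ((t - s : ℝ) : ℂ) ^ (n + 1) / (Nat.factorial (n + 1) : ℂ) * g (n + 1) s) := by
      funext s
      rw [Finset.sum_range_succ]
    rw [e]
    refine h3.congr_deriv ?_
    have hf : (Nat.factorial n : ℂ) ≠ 0 := by exact_mod_cast Nat.factorial_ne_zero n
    have hn : ((n : ℂ) + 1) ≠ 0 := by exact_mod_cast Nat.succ_ne_zero n
    simp only [Nat.factorial_succ, Nat.add_sub_cancel, Pi.pow_apply]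
    push_cast
    field_simp
    ring

theorem taylor_aux (g : ℕ → ℝ → ℂ) (hg : ∀ k s, HasDerivAt (g k) (g (k + 1) s) s)
    (n : ℕ) (h0 : ∀ s, g (n + 1) s = 0) (t : ℝ) :
    g 0 t = ∑ k ∈ Finset.range (n + 1), (t : ℂ) ^ k / (Nat.factorial k : ℂ) * g k 0 := by
  have hd := taylor_deriv_aux g t hg n
  have hc := is_const_of_deriv_eq_zero (fun s => (hd s).differentiableAt)
    (fun s => by rw [(hd s).deriv, h0, mul_zero]) t 0
  simp only [sub_self, sub_zero] at hc
  rw [← hc, Finset.sum_range_succ']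
  simp

theorem scalingOp_eq (m : ℕ) (ρ : ℂ) (u : (Fin m → ℝ) → ℂ) (x : Fin m → ℝ) :
    scalingOp m ρ u x = fderiv ℝ u x x + ρ * u x := by
  have hx : x = ∑ i, x i • (Pi.single i (1 : ℝ) : Fin m → ℝ) := by
    simpa using pi_eq_sum_univ' x
  unfold scalingOp
  congr 1
  conv_rhs => rw [show fderiv ℝ u x x = fderiv ℝ u x (∑ i, x i • (Pi.single i (1 : ℝ) : Fin m → ℝ)) by
    rw [← hx]]
  simp only [map_sum, map_smul, Complex.real_smul]

theorem scalingOp_smooth (m : ℕ) (ρ : ℂ) (u : (Fin m → ℝ) → ℂ)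
    (hu : ContDiffOn ℝ (⊤ : ℕ∞) u {x : Fin m → ℝ | x ≠ 0}) :
    ContDiffOn ℝ (⊤ : ℕ∞) (scalingOp m ρ u) {x : Fin m → ℝ | x ≠ 0} := by
  have ho : IsOpen {x : Fin m → ℝ | x ≠ 0} := isOpen_ne
  have h1 := hu.fderiv_of_isOpen (m := (⊤ : ℕ∞)) ho (by exact_mod_cast le_top)
  have h2 := (h1.clm_apply contDiffOn_id).add (contDiffOn_const (c := ρ) |>.mul hu)
  exact h2.congr fun x _ => scalingOp_eq m ρ u x

theorem scalingOp_deriv (m : ℕ) (ρ : ℂ) (u : (Fin m → ℝ) → ℂ)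
    (hu : ContDiffOn ℝ (⊤ : ℕ∞) u {x : Fin m → ℝ | x ≠ 0}) (x : Fin m → ℝ) (hx : x ≠ 0)
    (s : ℝ) :
    HasDerivAt (fun s : ℝ => Complex.exp (ρ * s) * u (Real.exp s • x))
      (Complex.exp (ρ * s) * scalingOp m ρ u (Real.exp s • x)) s := by
  have hy : Real.exp s • x ≠ 0 := smul_ne_zero (Real.exp_ne_zero s) hx
  have ho : IsOpen {x : Fin m → ℝ | x ≠ 0} := isOpen_ne
  have hd : DifferentiableAt ℝ u (Real.exp s • x) :=
    (hu.contDiffAt (ho.mem_nhds hy)).differentiableAt (by simp)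
  have h1 : HasDerivAt (fun s : ℝ => Real.exp s • x) (Real.exp s • x) s :=
    (Real.hasDerivAt_exp s).smul_const x
  have h2 := hd.hasFDerivAt.comp_hasDerivAt s h1
  have h3 : HasDerivAt (fun s : ℝ => Complex.exp (ρ * s)) (Complex.exp (ρ * s) * ρ) s := by
    have := ((hasDerivAt_id s).ofReal_comp.const_mul ρ).cexp
    simpa using this
  refine (h3.mul h2).congr_deriv ?_
  rw [scalingOp_eq]
  simp only [Function.comp]
  ring

/-- representation formula for almost homogeneously scaling smooth
functions on `ℝ^m \ {0}`. -/
theorem almost_homogeneous_representation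
    (m N : ℕ) (hm : 1 ≤ m) (hN : 1 ≤ N) (ρ : ℂ)
    (u : (Fin m → ℝ) → ℂ)
    (hu : ContDiffOn ℝ (⊤ : ℕ∞) u {x : Fin m → ℝ | x ≠ 0})
    (hscale : ∀ x : Fin m → ℝ, x ≠ 0 → ((scalingOp m ρ)^[N] u) x = 0) :
    ∀ x : Fin m → ℝ, x ≠ 0 → ∀ r : ℝ, 0 < r →
      u (r • x) = (r : ℂ) ^ (-ρ) *
        ∑ k ∈ Finset.range N,
          ((Real.log r : ℂ)) ^ k / (Nat.factorial k : ℂ) * ((scalingOp m ρ)^[k] u) x := by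
  intro x hx r hr
  have hsm : ∀ k, ContDiffOn ℝ (⊤ : ℕ∞) ((scalingOp m ρ)^[k] u) {x : Fin m → ℝ | x ≠ 0} := by
    intro k
    induction k with
    | zero => exact hu
    | succ k ih =>
      rw [Function.iterate_succ_apply']
      exact scalingOp_smooth m ρ _ ih
  obtain ⟨n, rfl⟩ : ∃ n, N = n + 1 := ⟨N - 1, by omega⟩
  have key := taylor_aux
    (fun k s => Complex.exp (ρ * s) * ((scalingOp m ρ)^[k] u) (Real.exp s • x))
    (fun k s => by
      have := scalingOp_deriv m ρ _ (hsm k) x hx s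
      simp only [Function.iterate_succ_apply']
      exact this) n
    (fun s => by
      rw [hscale _ (smul_ne_zero (Real.exp_ne_zero s) hx), mul_zero]) (Real.log r)
  simp only [Real.exp_log hr, Function.iterate_zero, id, Complex.ofReal_zero, mul_zero,
    Complex.exp_zero, one_mul, Real.exp_zero, one_smul] at key
  have hr' : (r : ℂ) ≠ 0 := by exact_mod_cast hr.ne'
  rw [← key, Complex.cpow_def_of_ne_zero hr', ← mul_assoc, ← Complex.exp_add,
    Complex.ofReal_log hr.le]
  rw [show Complex.log r * -ρ + ρ * Complex.log r = 0 by ring, Complex.exp_zero, one_mul]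
end

section
/- Let N ≥ 1, let s ∈ ℂ, and let h_0,…,h_{N-1} : (0,∞) → ℂ be continuous functions whose supports are contained in a compact subset of (0,∞). For a ∈ ℂ define I_k(a) = ∫_0^∞ r^{a+s} h_k(r) dr, where r^{z} = exp(z·log r). Then each I_k is an entire function of a, and (1/(N-1)!) times the (N-1)-st complex derivative, evaluated at a = 0, of the entire function a ↦ Σ_{k=0}^{N-1} a^{N-1-k} I_k(a) equals Σ_{k=0}^{N-1} ∫_0^∞ r^{s} ((log r)^k / k!) h_k(r) dr. (In other words, the residue at a = 0 of Σ_{k=0}^{N-1} a^{-(k+1)} I_k(a) equals Σ_{k=0}^{N-1} ∫_0^∞ r^{s} ((log r)^k / k!) h_k(r) dr.) -/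
open MeasureTheory

/-- Continuous on `(0,∞)` with support in a compact subset of `(0,∞)`. -/
def ScalingAdm (g : ℝ → ℂ) : Prop :=
  ContinuousOn g (Set.Ioi 0) ∧ ∃ K : Set ℝ, IsCompact K ∧ K ⊆ Set.Ioi (0 : ℝ) ∧
      Function.support g ⊆ K

lemma ScalingAdm.log_mul {g : ℝ → ℂ} (hg : ScalingAdm g) :
    ScalingAdm (fun r => (Real.log r : ℂ) * g r) := by
  obtain ⟨hc, K, hK, hK0, hs⟩ := hg
  refine ⟨?_, K, hK, hK0, fun r hr => hs ?_⟩
  · refine ContinuousOn.mul ?_ hc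
    refine Complex.continuous_ofReal.comp_continuousOn (Real.continuousOn_log.mono ?_)
    intro x hx
    exact ne_of_gt hx
  · intro h0
    apply hr
    simp [h0]

lemma ScalingAdm.hasDerivAt {g : ℝ → ℂ} (hg : ScalingAdm g) (s a : ℂ) :
    HasDerivAt (fun a : ℂ => ∫ r in Set.Ioi (0 : ℝ), (r : ℂ) ^ (a + s) * g r)
      (∫ r in Set.Ioi (0 : ℝ), (r : ℂ) ^ (a + s) * ((Real.log r : ℂ) * g r)) a := by
  obtain ⟨hc, K, hK, hK0, hs⟩ := hg
  have hz : ∀ x, x ∉ K → g x = 0 := fun x hx => by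
    by_contra h
    exact hx (hs h)
  have htop : g =ᶠ[Filter.atTop] fun _ => 0 := by
    obtain ⟨B, hB⟩ := hK.bddAbove
    filter_upwards [Filter.eventually_gt_atTop B] with x hx
    exact hz x fun h => absurd (hB h) (not_le.mpr hx)
  have hbot : g =ᶠ[nhdsWithin 0 (Set.Ioi 0)] fun _ => 0 := by
    have : Kᶜ ∈ nhds (0 : ℝ) := hK.isClosed.isOpen_compl.mem_nhds
      fun h => lt_irrefl (0 : ℝ) (Set.mem_Ioi.mp (hK0 h))
    filter_upwards [nhdsWithin_le_nhds this] with x hx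
    exact hz x hx
  have key := (mellin_hasDerivAt_of_isBigO_rpow (f := g) (s := a + (s + 1))
    (a := (a + (s + 1)).re + 1) (b := (a + (s + 1)).re - 1)
    (hc.locallyIntegrableOn measurableSet_Ioi)
    (htop.trans_isBigO (Asymptotics.isBigO_zero _ _)) (by linarith)
    (hbot.trans_isBigO (Asymptotics.isBigO_zero _ _)) (by linarith)).2
  have h2 := key.comp_add_const a (s + 1)
  have e : ∀ a : ℂ, a + (s + 1) - 1 = a + s := fun a => by ring
  simpa only [mellin, e, smul_eq_mul, Complex.real_smul] using h2

lemma ScalingAdm.iteratedDeriv (s : ℂ) (n : ℕ) : ∀ {g : ℝ → ℂ}, ScalingAdm g →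
    iteratedDeriv n (fun a : ℂ => ∫ r in Set.Ioi (0 : ℝ), (r : ℂ) ^ (a + s) * g r) =
      fun a : ℂ => ∫ r in Set.Ioi (0 : ℝ), (r : ℂ) ^ (a + s) * ((Real.log r : ℂ) ^ n * g r) := by
  induction n with
  | zero => intro g hg; simp
  | succ n ih =>
    intro g hg
    rw [iteratedDeriv_succ', funext fun a => (hg.hasDerivAt s a).deriv, ih hg.log_mul]
    simp only [pow_succ, mul_assoc]

lemma iteratedDeriv_pow_mul_zero {F : ℂ → ℂ} (hF : Differentiable ℂ F) (m k : ℕ) :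
    iteratedDeriv (m + k) (fun a => a ^ m * F a) 0 =
      ((m + k).choose m : ℂ) * (m.factorial : ℂ) * iteratedDeriv k F 0 := by
  have h1 : ContDiffAt ℂ ((m + k : ℕ) : WithTop ℕ∞) (fun a : ℂ => a ^ m) 0 := by fun_prop
  have h2 : ContDiffAt ℂ ((m + k : ℕ) : WithTop ℕ∞) F 0 := hF.contDiff.contDiffAt
  have := iteratedDeriv_mul h1 h2
  rw [show (fun a => a ^ m * F a) = (fun a : ℂ => a ^ m) * F from rfl, this,
    Finset.sum_eq_single m]
  · rw [iteratedDeriv_fun_pow_zero]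
    simp
  · intro b _ hb
    rw [iteratedDeriv_fun_pow_zero]
    simp [hb]
  · intro h
    exact absurd (Finset.mem_range.mpr (by lia)) h


/-- the residue identity behind the construction of extensions of almost
homogeneously scaling distributions. For continuous `h_0, …, h_{N-1}` compactly supported
in `(0,∞)`, each `I_k(a) = ∫_0^∞ r^{a+s} h_k(r) dr` is entire, and
`(1/(N-1)!) (d/da)^{N-1} [Σ_k a^{N-1-k} I_k(a)]` at `a = 0` (i.e. the residue at `a = 0`
of `Σ_k a^{-(k+1)} I_k(a)`) equals `Σ_k ∫_0^∞ r^s ((log r)^k / k!) h_k(r) dr`. -/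
theorem residue_formula_for_scaling_integrals
    (N : ℕ) (hN : 1 ≤ N) (s : ℂ) (h : ℕ → ℝ → ℂ)
    (hcont : ∀ k < N, Continuous (h k))
    (hsupp : ∀ k < N, ∃ K : Set ℝ, IsCompact K ∧ K ⊆ Set.Ioi (0 : ℝ) ∧
      Function.support (h k) ⊆ K) :
    (∀ k < N, Differentiable ℂ
      (fun a : ℂ => ∫ r in Set.Ioi (0 : ℝ), (r : ℂ) ^ (a + s) * h k r)) ∧
    (1 / (Nat.factorial (N - 1) : ℂ)) *
        iteratedDeriv (N - 1)
          (fun a : ℂ => ∑ k ∈ Finset.range N,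
            a ^ (N - 1 - k) * ∫ r in Set.Ioi (0 : ℝ), (r : ℂ) ^ (a + s) * h k r) 0
      = ∑ k ∈ Finset.range N,
          ∫ r in Set.Ioi (0 : ℝ),
            (r : ℂ) ^ s * (((Real.log r : ℂ)) ^ k / (Nat.factorial k : ℂ)) * h k r := by
  have hadm : ∀ k < N, ScalingAdm (h k) := fun k hk => ⟨(hcont k hk).continuousOn, hsupp k hk⟩
  have hdiff : ∀ k < N, Differentiable ℂ
      (fun a : ℂ => ∫ r in Set.Ioi (0 : ℝ), (r : ℂ) ^ (a + s) * h k r) :=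
    fun k hk a => ((hadm k hk).hasDerivAt s a).differentiableAt
  refine ⟨hdiff, ?_⟩
  rw [iteratedDeriv_fun_sum, Finset.mul_sum]
  · refine Finset.sum_congr rfl fun k hk => ?_
    have hk' := Finset.mem_range.mp hk
    obtain ⟨m, hm⟩ : ∃ m, N - 1 = m + k := ⟨N - 1 - k, by lia⟩
    rw [hm, Nat.add_sub_cancel, iteratedDeriv_pow_mul_zero (hdiff k hk'),
      ScalingAdm.iteratedDeriv s k (hadm k hk')]
    have hfac : (1 / ((m + k).factorial : ℂ)) * (((m + k).choose m : ℂ) * (m.factorial : ℂ)) =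
        1 / (k.factorial : ℂ) := by
      have h3 : ((m + k).choose m : ℂ) * m.factorial * k.factorial = (m + k).factorial := by
        have := Nat.choose_mul_factorial_mul_factorial (Nat.le_add_right m k)
        rw [Nat.add_sub_cancel_left] at this
        exact_mod_cast this
      have h4 : ((m + k).factorial : ℂ) ≠ 0 := by exact_mod_cast Nat.factorial_ne_zero _
      have h5 : (k.factorial : ℂ) ≠ 0 := by exact_mod_cast Nat.factorial_ne_zero _
      field_simp
      linear_combination h3
    rw [← mul_assoc, hfac, ← integral_const_mul]
    refine integral_congr_ae (Filter.Eventually.of_forall fun r => ?_)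
    simp only [zero_add]
    ring
  · intro k hk
    have := (hdiff k (Finset.mem_range.mp hk)).contDiff (n := ((N - 1 : ℕ) : WithTop ℕ∞))
    exact ((contDiff_id.pow _).mul this).contDiffAt
end

section
/- Let V be a complex vector space with a hermitian sesquilinear form ⟨·,·⟩, and let (Q_k)_{k∈ℕ} be a sequence of linear maps V → V, each symmetric with respect to ⟨·,·⟩, satisfying the nilpotency relations Σ_{k=0}^m Q_k ∘ Q_{m-k} = 0 for every m ∈ ℕ. Let n ≥ 1 and let ψ_0,…,ψ_{n-1} ∈ V satisfy Σ_{k=0}^m Q_k ψ_{m-k} = 0 for every m with 0 ≤ m ≤ n-1. For m ∈ ℕ define χ_m := Σ_{k=0}^{min(m,n-1)} Q_{m-k} ψ_k. Then: (i) χ_m = 0 for all m ≤ n-1; (ii) Σ_{k=0}^m Q_{m-k} χ_k = 0 for every m ∈ ℕ; (iii) Σ_{k=0}^m ⟨χ_k, χ_{m-k}⟩ = 0 for every m ∈ ℕ; in particular Q_0 χ_n = 0 and ⟨χ_n, χ_n⟩ = 0. -/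
theorem brst_sum_assoc {M : Type*} [AddCommMonoid M] (f : ℕ → ℕ → ℕ → M) (m : ℕ) :
    ∑ p ∈ Finset.HasAntidiagonal.antidiagonal m, ∑ q ∈ Finset.HasAntidiagonal.antidiagonal p.1, f q.1 q.2 p.2 =
      ∑ p ∈ Finset.HasAntidiagonal.antidiagonal m, ∑ q ∈ Finset.HasAntidiagonal.antidiagonal p.2, f p.1 q.1 q.2 := by
  rw [Finset.sum_sigma', Finset.sum_sigma']
  refine Finset.sum_bij'
    (fun x _ => ⟨(x.2.1, x.2.2 + x.1.2), (x.2.2, x.1.2)⟩)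
    (fun x _ => ⟨(x.1.1 + x.2.1, x.2.2), (x.1.1, x.2.1)⟩) ?_ ?_ ?_ ?_ ?_
  · rintro ⟨⟨a, b⟩, ⟨c, d⟩⟩ h
    simp only [Finset.mem_sigma, Finset.HasAntidiagonal.mem_antidiagonal] at h ⊢
    obtain ⟨h1, h2⟩ := h
    refine ⟨?_, ?_⟩
    · omega
    · trivial
  · rintro ⟨⟨a, b⟩, ⟨c, d⟩⟩ h
    simp only [Finset.mem_sigma, Finset.HasAntidiagonal.mem_antidiagonal] at h ⊢
    obtain ⟨h1, h2⟩ := h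
    refine ⟨?_, ?_⟩
    · omega
    · trivial
  · rintro ⟨⟨a, b⟩, ⟨c, d⟩⟩ h
    simp only [Finset.mem_sigma, Finset.HasAntidiagonal.mem_antidiagonal] at h
    obtain ⟨_, rfl⟩ := h
    rfl
  · rintro ⟨⟨a, b⟩, ⟨c, d⟩⟩ h
    simp only [Finset.mem_sigma, Finset.HasAntidiagonal.mem_antidiagonal] at h
    obtain ⟨_, rfl⟩ := h
    rfl
  · rintro ⟨⟨a, b⟩, ⟨c, d⟩⟩ h
    rfl

/-- the intermediate identities in the inductive deformation construction
of BRST-closed states. Here `B` is a hermitian sesquilinear form on a complex vector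
space `V` (conjugate-linear in the first argument), `Q_k` are `B`-symmetric linear maps
with `Σ_{k=0}^m Q_k Q_{m-k} = 0` for all `m`, and `ψ_0, …, ψ_{n-1}` satisfy
`Σ_{k=0}^m Q_k ψ_{m-k} = 0` for `m ≤ n-1`. With
`χ_m = Σ_{k=0}^{min(m,n-1)} Q_{m-k} ψ_k` one has: (i) `χ_m = 0` for `m ≤ n-1`;
(ii) `Σ_{k=0}^m Q_{m-k} χ_k = 0`; (iii) `Σ_{k=0}^m ⟨χ_k, χ_{m-k}⟩ = 0`; in particular
`Q_0 χ_n = 0` and `⟨χ_n, χ_n⟩ = 0`. -/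
theorem brst_deformation_chi_identities
    {V : Type*} [AddCommGroup V] [Module ℂ V]
    (B : V → V → ℂ)
    (hB_add_left : ∀ v w u : V, B (v + w) u = B v u + B w u)
    (hB_add_right : ∀ u v w : V, B u (v + w) = B u v + B u w)
    (hB_smul_left : ∀ (a : ℂ) (v w : V), B (a • v) w = (starRingEnd ℂ) a * B v w)
    (hB_smul_right : ∀ (a : ℂ) (v w : V), B v (a • w) = a * B v w)
    (hB_herm : ∀ v w : V, B v w = (starRingEnd ℂ) (B w v))
    (Q : ℕ → V →ₗ[ℂ] V)
    (hQ_symm : ∀ (k : ℕ) (v w : V), B (Q k v) w = B v (Q k w))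
    (hQ_nilp : ∀ (m : ℕ) (v : V), ∑ k ∈ Finset.range (m + 1), Q k (Q (m - k) v) = 0)
    (n : ℕ) (hn : 1 ≤ n) (ψ : ℕ → V)
    (hψ : ∀ m < n, ∑ k ∈ Finset.range (m + 1), Q k (ψ (m - k)) = 0)
    (χ : ℕ → V)
    (hχ : ∀ m : ℕ, χ m = ∑ k ∈ Finset.range (min (m + 1) n), Q (m - k) (ψ k)) :
    (∀ m < n, χ m = 0) ∧
    (∀ m : ℕ, ∑ k ∈ Finset.range (m + 1), Q (m - k) (χ k) = 0) ∧
    (∀ m : ℕ, ∑ k ∈ Finset.range (m + 1), B (χ k) (χ (m - k)) = 0) ∧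
    Q 0 (χ n) = 0 ∧ B (χ n) (χ n) = 0 := by
  set φ : ℕ → V := fun k => if k < n then ψ k else 0 with hφ
  have B0l : ∀ u, B 0 u = 0 := fun u => by simpa using hB_smul_left 0 0 u
  have B0r : ∀ u, B u 0 = 0 := fun u => by simpa using hB_smul_right 0 u 0
  have Bsl : ∀ (s : Finset (ℕ × ℕ)) (f : ℕ × ℕ → V) (u : V),
      B (∑ i ∈ s, f i) u = ∑ i ∈ s, B (f i) u := fun s f u =>
    map_sum (AddMonoidHom.mk' (fun v => B v u) (fun v w => hB_add_left v w u)) f s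
  have Bsr : ∀ (s : Finset (ℕ × ℕ)) (f : ℕ × ℕ → V) (u : V),
      B u (∑ i ∈ s, f i) = ∑ i ∈ s, B u (f i) := fun s f u =>
    map_sum (AddMonoidHom.mk' (fun v => B u v) (fun v w => hB_add_right u v w)) f s
  have hN : ∀ (m : ℕ) (v : V), ∑ p ∈ Finset.HasAntidiagonal.antidiagonal m, Q p.1 (Q p.2 v) = 0 := by
    intro m v
    rw [← hQ_nilp m v]
    exact Finset.Nat.sum_antidiagonal_eq_sum_range_succ (fun a b => Q a (Q b v)) m
  have hX : ∀ m, χ m = ∑ p ∈ Finset.HasAntidiagonal.antidiagonal m, Q p.2 (φ p.1) := by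
    intro m
    rw [Finset.Nat.sum_antidiagonal_eq_sum_range_succ (fun a b => Q b (φ a)) m, hχ m]
    rw [← Finset.sum_subset (Finset.range_subset_range.2 (min_le_left (m + 1) n))]
    · apply Finset.sum_congr rfl
      intro k hk
      have : k < n := by
        have := Finset.mem_range.1 hk
        omega
      simp [hφ, this]
    · intro k hk hk2
      have : ¬ k < n := by
        simp only [Finset.mem_range] at hk hk2
        omega
      simp [hφ, this]
  have h1 : ∀ m < n, χ m = 0 := by
    intro m hm
    rw [← hψ m hm, hχ m, min_eq_left (by omega), ← Finset.sum_range_reflect]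
    apply Finset.sum_congr rfl
    intro k hk
    have := Finset.mem_range.1 hk
    congr 2 <;> omega
  have h2' : ∀ m, ∑ p ∈ Finset.HasAntidiagonal.antidiagonal m, Q p.2 (χ p.1) = 0 := by
    intro m
    simp only [hX, map_sum]
    rw [brst_sum_assoc (fun a b c => Q c (Q b (φ a))) m]
    apply Finset.sum_eq_zero
    intro p _
    rw [← hN p.2 (φ p.1), ← Finset.Nat.sum_antidiagonal_swap]
    rfl
  have h2 : ∀ m : ℕ, ∑ k ∈ Finset.range (m + 1), Q (m - k) (χ k) = 0 := by
    intro m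
    rw [← h2' m]
    exact (Finset.Nat.sum_antidiagonal_eq_sum_range_succ (fun a b => Q b (χ a)) m).symm
  have h3 : ∀ m : ℕ, ∑ k ∈ Finset.range (m + 1), B (χ k) (χ (m - k)) = 0 := by
    intro m
    rw [← Finset.Nat.sum_antidiagonal_eq_sum_range_succ (fun a b => B (χ a) (χ b)) m]
    have : ∀ p : ℕ × ℕ, B (χ p.1) (χ p.2) =
        ∑ q ∈ Finset.HasAntidiagonal.antidiagonal p.1, B (φ q.1) (Q q.2 (χ p.2)) := by
      intro p
      rw [hX p.1, Bsl]
      exact Finset.sum_congr rfl fun q _ => hQ_symm _ _ _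
    simp only [this]
    rw [brst_sum_assoc (fun a b c => B (φ a) (Q b (χ c))) m]
    apply Finset.sum_eq_zero
    intro p _
    rw [← Bsr (Finset.HasAntidiagonal.antidiagonal p.2) (fun q => Q q.1 (χ q.2)), ← Finset.Nat.sum_antidiagonal_swap]
    exact (congrArg _ (h2' p.2)).trans (B0r _)
  refine ⟨h1, h2, h3, ?_, ?_⟩
  · have h := h2 n
    rw [Finset.sum_eq_single n] at h
    · simpa using h
    · intro k hk hne
      have := Finset.mem_range.1 hk
      rw [h1 k (by omega), map_zero]
    · simp
  · have h := h3 (n + n)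
    rw [Finset.sum_eq_single n] at h
    · simpa using h
    · intro k hk hne
      have := Finset.mem_range.1 hk
      rcases lt_or_gt_of_ne hne with hlt | hgt
      · rw [h1 k hlt, B0l]
      · rw [h1 (n + n - k) (by omega), B0r]
    · intro hh
      exact absurd (Finset.mem_range.2 (by omega)) hh
end

section
/- Let V be a complex vector space with a hermitian sesquilinear form ⟨·,·⟩, and let (Q_k)_{k∈ℕ} be a sequence of linear maps V → V, each symmetric with respect to ⟨·,·⟩, satisfying the nilpotency relations Σ_{k=0}^m Q_k ∘ Q_{m-k} = 0 for every m ∈ ℕ. Assume the positivity requirement for Q_0: for every v ∈ ker Q_0 the number ⟨v,v⟩ is real and nonnegative, and ⟨v,v⟩ = 0 if and only if v ∈ range Q_0. Then for every ψ_0 ∈ ker Q_0 there exist vectors ψ_1, ψ_2, … ∈ V such that Σ_{k=0}^m Q_k ψ_{m-k} = 0 for every m ∈ ℕ; that is, the formal power series ψ = Σ_{n≥0} λ^n ψ_n satisfies Q ψ = 0 for the formal power series operator Q = Σ_{k≥0} λ^k Q_k. -/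
open Finset in
theorem brst_assoc {M : Type*} [AddCommMonoid M] (f : ℕ → ℕ → ℕ → M) (N : ℕ) :
    ∑ p ∈ antidiagonal N, ∑ q ∈ antidiagonal p.1, f q.1 q.2 p.2 =
      ∑ p ∈ antidiagonal N, ∑ q ∈ antidiagonal p.2, f p.1 q.1 q.2 := by
  rw [Finset.sum_sigma', Finset.sum_sigma']
  refine Finset.sum_nbij' (fun x => ⟨(x.2.1, x.2.2 + x.1.2), (x.2.2, x.1.2)⟩)
    (fun x => ⟨(x.1.1 + x.2.1, x.2.2), (x.1.1, x.2.1)⟩) ?_ ?_ ?_ ?_ ?_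
  · rintro ⟨⟨a, b⟩, c, d⟩ h
    simp only [mem_sigma, HasAntidiagonal.mem_antidiagonal] at h ⊢
    exact ⟨by omega, trivial⟩
  · rintro ⟨⟨a, b⟩, c, d⟩ h
    simp only [mem_sigma, HasAntidiagonal.mem_antidiagonal] at h ⊢
    exact ⟨by omega, trivial⟩
  · rintro ⟨⟨a, b⟩, c, d⟩ h
    simp only [mem_sigma, HasAntidiagonal.mem_antidiagonal] at h
    obtain ⟨h1, rfl⟩ := h
    rfl
  · rintro ⟨⟨a, b⟩, c, d⟩ h
    simp only [mem_sigma, HasAntidiagonal.mem_antidiagonal] at h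
    obtain ⟨h1, rfl⟩ := h
    rfl
  · rintro ⟨⟨a, b⟩, c, d⟩ h
    rfl



/-- the deformation argument. Given a hermitian sesquilinear form `B`
on a complex vector space `V`, `B`-symmetric linear maps `Q_k` with
`Σ_{k=0}^m Q_k Q_{m-k} = 0` for all `m`, and the positivity requirement for `Q_0`
(`⟨v,v⟩` real and nonnegative on `ker Q_0`, vanishing exactly on `range Q_0`),
every `ψ_0 ∈ ker Q_0` extends to a formal power series `ψ = Σ λ^n ψ_n` with
`Q ψ = 0`, i.e. `Σ_{k=0}^m Q_k ψ_{m-k} = 0` for all `m`. -/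
theorem brst_state_deformation
    {V : Type*} [AddCommGroup V] [Module ℂ V]
    (B : V → V → ℂ)
    (hB_add_left : ∀ v w u : V, B (v + w) u = B v u + B w u)
    (hB_add_right : ∀ u v w : V, B u (v + w) = B u v + B u w)
    (hB_smul_left : ∀ (a : ℂ) (v w : V), B (a • v) w = (starRingEnd ℂ) a * B v w)
    (hB_smul_right : ∀ (a : ℂ) (v w : V), B v (a • w) = a * B v w)
    (hB_herm : ∀ v w : V, B v w = (starRingEnd ℂ) (B w v))
    (Q : ℕ → V →ₗ[ℂ] V)
    (hQ_symm : ∀ (k : ℕ) (v w : V), B (Q k v) w = B v (Q k w))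
    (hQ_nilp : ∀ (m : ℕ) (v : V), ∑ k ∈ Finset.range (m + 1), Q k (Q (m - k) v) = 0)
    (hpos_real : ∀ v : V, Q 0 v = 0 → (B v v).im = 0 ∧ 0 ≤ (B v v).re)
    (hpos_null : ∀ v : V, Q 0 v = 0 → (B v v = 0 ↔ v ∈ Set.range (Q 0))) :
    ∀ ψ₀ : V, Q 0 ψ₀ = 0 →
      ∃ ψ : ℕ → V, ψ 0 = ψ₀ ∧
        ∀ m : ℕ, ∑ k ∈ Finset.range (m + 1), Q k (ψ (m - k)) = 0 := by
  intro ψ₀ hψ₀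
  have conv : ∀ (g : ℕ → ℕ → V) (m : ℕ), ∑ k ∈ Finset.range (m + 1), g k (m - k) =
      ∑ p ∈ Finset.HasAntidiagonal.antidiagonal m, g p.1 p.2 := fun g m =>
    (Finset.Nat.sum_antidiagonal_eq_sum_range_succ g m).symm
  have nil : ∀ (m : ℕ) (v : V), ∑ p ∈ Finset.HasAntidiagonal.antidiagonal m, Q p.1 (Q p.2 v) = 0 := by
    intro m v
    rw [← hQ_nilp m v, conv (fun a b => Q a (Q b v))]
  have conv2 : ∀ (φ : ℕ → V) (m : ℕ), ∑ k ∈ Finset.range (m + 1), Q k (φ (m - k)) =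
      ∑ p ∈ Finset.HasAntidiagonal.antidiagonal m, Q p.1 (φ p.2) := fun φ m => conv (fun a b => Q a (φ b)) m
  simp only [conv2]
  obtain ⟨c, hc⟩ : ∃ c : (ℕ → V) → ℕ → V, ∀ φ m,
      c φ m = ∑ p ∈ Finset.HasAntidiagonal.antidiagonal m, Q p.1 (φ p.2) := ⟨_, fun _ _ => rfl⟩
  simp only [← hc]
  have B0l : ∀ u, B 0 u = 0 := fun u => by simpa using hB_smul_left 0 0 u
  have B0r : ∀ u, B u 0 = 0 := fun u => by simpa using hB_smul_right 0 u 0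
  have Bsl : ∀ (s : Finset (ℕ × ℕ)) (f : ℕ × ℕ → V) u,
      B (∑ i ∈ s, f i) u = ∑ i ∈ s, B (f i) u := fun s f u =>
    map_sum (AddMonoidHom.mk' (fun v => B v u) (fun v w => hB_add_left v w u)) f s
  have Bsr : ∀ (s : Finset (ℕ × ℕ)) (f : ℕ × ℕ → V) u,
      B u (∑ i ∈ s, f i) = ∑ i ∈ s, B u (f i) := fun s f u =>
    map_sum (AddMonoidHom.mk' (fun v => B u v) (fun v w => hB_add_right u v w)) f s
  have Qc : ∀ φ m, ∑ p ∈ Finset.HasAntidiagonal.antidiagonal m, Q p.1 (c φ p.2) = 0 := by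
    intro φ m
    simp only [hc, map_sum]
    rw [← brst_assoc (fun a b j => Q a (Q b (φ j)))]
    exact Finset.sum_eq_zero fun p _ => nil _ _
  have Bc : ∀ φ m, ∑ p ∈ Finset.HasAntidiagonal.antidiagonal m, B (c φ p.1) (c φ p.2) = 0 := by
    intro φ m
    have h1 : ∀ p : ℕ × ℕ, B (c φ p.1) (c φ p.2) =
        ∑ q ∈ Finset.HasAntidiagonal.antidiagonal p.1, B (φ q.1) (Q q.2 (c φ p.2)) := by
      intro p
      rw [hc φ p.1, Bsl, ← Finset.Nat.sum_antidiagonal_swap]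
      exact Finset.sum_congr rfl fun q _ => hQ_symm _ _ _
    simp only [h1]
    rw [brst_assoc (fun a b j => B (φ a) (Q b (c φ j)))]
    refine Finset.sum_eq_zero fun p _ => ?_
    rw [← Bsr, Qc, B0r]
  have key : ∀ φ N, (∀ m < N, c φ m = 0) → ∃ x, Q 0 x = c φ N := by
    intro φ N h
    have hk : Q 0 (c φ N) = 0 := by
      rw [← Qc φ N]
      symm
      refine Finset.sum_eq_single_of_mem (0, N) (by simp) ?_
      rintro ⟨a, b⟩ hp hne
      simp only [Finset.HasAntidiagonal.mem_antidiagonal] at hp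
      have : b < N := by
        by_contra hb
        exact hne (Prod.ext (by simp; omega) (by simp; omega))
      simp [h b this]
    refine (hpos_null _ hk).1 ?_
    rw [← Bc φ (N + N)]
    symm
    refine Finset.sum_eq_single_of_mem (N, N) (by simp) ?_
    rintro ⟨a, b⟩ hp hne
    simp only [Finset.HasAntidiagonal.mem_antidiagonal] at hp
    by_cases ha : a < N
    · simp [h a ha, B0l]
    · have hb : b < N := by
        by_contra hb
        exact hne (Prod.ext (by simp; omega) (by simp; omega))
      simp [h b hb, B0r]
  have cloc : ∀ φ φ' m, (∀ i ≤ m, φ i = φ' i) → c φ m = c φ' m := by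
    intro φ φ' m h
    rw [hc, hc]
    refine Finset.sum_congr rfl fun p hp => ?_
    rw [h p.2 (Finset.HasAntidiagonal.antidiagonal.snd_le hp)]
  have step : ∀ (n : ℕ) (φ : ℕ → V), (φ 0 = ψ₀ ∧ ∀ m < n + 1, c φ m = 0) →
      ∃ φ' : ℕ → V, (φ' 0 = ψ₀ ∧ ∀ m < n + 2, c φ' m = 0) ∧ ∀ i ≤ n, φ' i = φ i := by
    rintro n φ ⟨h0, h⟩
    obtain ⟨x, hx⟩ := key φ (n + 1) h
    have hag : ∀ i ≤ n, Function.update φ (n + 1) (φ (n + 1) - x) i = φ i := fun i hi =>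
      Function.update_of_ne (by omega) _ _
    refine ⟨Function.update φ (n + 1) (φ (n + 1) - x), ⟨?_, ?_⟩, hag⟩
    · rw [hag 0 (Nat.zero_le _), h0]
    · intro m hm
      by_cases hm' : m < n + 1
      · rw [cloc _ φ m fun i hi => hag i (by omega), h m hm']
      · obtain rfl : m = n + 1 := by omega
        have e : c φ (n + 1) = ∑ p ∈ Finset.HasAntidiagonal.antidiagonal (n + 1), Q p.1 (φ p.2) := hc _ _
        rw [hc]
        rw [Finset.Nat.sum_antidiagonal_succ] at e ⊢
        have e2 : ∑ p ∈ Finset.HasAntidiagonal.antidiagonal n,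
            Q (p.1 + 1) (Function.update φ (n + 1) (φ (n + 1) - x) p.2) =
            ∑ p ∈ Finset.HasAntidiagonal.antidiagonal n, Q (p.1 + 1) (φ p.2) :=
          Finset.sum_congr rfl fun p hp => by
            rw [hag p.2 (Finset.HasAntidiagonal.antidiagonal.snd_le hp)]
        simp only at e ⊢
        rw [e2, Function.update_self, map_sub, hx, e]
        abel
  choose! F hF hFa using step
  let Φ : ℕ → ℕ → V := fun n => Nat.rec (fun _ => ψ₀) (fun n φ => F n φ) n
  have hΦ : ∀ n, Φ n 0 = ψ₀ ∧ ∀ m < n + 1, c (Φ n) m = 0 := by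
    intro n
    induction n with
    | zero =>
      refine ⟨rfl, fun m hm => ?_⟩
      obtain rfl : m = 0 := by omega
      rw [hc]
      simpa [Φ] using hψ₀
    | succ n ih => exact hF n _ ih
  have hag : ∀ i d, Φ (i + d) i = Φ i i := by
    intro i d
    induction d with
    | zero => rfl
    | succ d ih => rw [← ih]; exact hFa (i + d) _ (hΦ _) i (by omega)
  refine ⟨fun n => Φ n n, rfl, fun m => ?_⟩
  rw [cloc _ (Φ m) m, (hΦ m).2 m (by omega)]
  intro i hi
  obtain ⟨d, rfl⟩ := Nat.exists_eq_add_of_le hi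
  exact (hag i d).symm
end

section
/- Let n ≥ 1, p ≥ 0, and for each m with 0 ≤ m ≤ p let β_m be a smooth function on ℝ^n with real components β_m^{μ ν_1 … ν_m σ} (all indices ranging over {1,…,n}), symmetric under permutations of the indices ν_1,…,ν_m. Suppose that for all smooth compactly supported functions h_1, h_2 : ℝ^n → ℝ one has ∫_{ℝ^n} Σ_{m=0}^p Σ_{indices} β_m^{μ ν_1…ν_m σ}(x) ∂_μ h_1(x) ∂_{ν_1}⋯∂_{ν_m}∂_σ h_2(x) dx = 0. Then the weight-one total symmetrization of the top coefficient vanishes identically: β_p^{(μ ν_1 … ν_p σ)}(x) = 0 for all x ∈ ℝ^n, i.e. the average of β_p over all permutations of its p+2 indices is zero. -/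
open MeasureTheory

/-- Families polynomial in `t` of degree `≤ d`, with smooth compactly supported coefficients and
`t ^ d`-coefficient `top`. -/
def PolyFam {E : Type*} [NormedAddCommGroup E] [NormedSpace ℝ E]
    (d : ℕ) (top : E → ℝ) (F : ℝ → E → ℝ) : Prop :=
  ∃ g : ℕ → E → ℝ, (∀ j, ContDiff ℝ (⊤ : ℕ∞) (g j) ∧ HasCompactSupport (g j)) ∧
    g d = top ∧ (∀ j, d < j → g j = 0) ∧
    ∀ t x, F t x = ∑ j ∈ Finset.range (d + 1), t ^ j * g j x

section PF
variable {E : Type*} [NormedAddCommGroup E] [NormedSpace ℝ E]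

lemma hcs_fderiv {f : E → ℝ} (hf : HasCompactSupport f) (v : E) :
    HasCompactSupport (fun x => fderiv ℝ f x v) :=
  hf.fderiv_apply ℝ v

lemma cd_fderiv {f : E → ℝ} (hf : ContDiff ℝ (⊤ : ℕ∞) f) (v : E) :
    ContDiff ℝ (⊤ : ℕ∞) (fun x => fderiv ℝ f x v) :=
  (hf.fderiv_right (m := (⊤ : ℕ∞)) (by simp)).clm_apply contDiff_const

lemma PolyFam.const {f : E → ℝ} (hf : ContDiff ℝ (⊤ : ℕ∞) f) (hc : HasCompactSupport f) :
    PolyFam 0 f (fun _ => f) := by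
  refine ⟨fun j => if j = 0 then f else 0, fun j => ?_, by simp, ?_, by simp⟩
  · by_cases h : j = 0
    · simp [h, hf, hc]
    · simp only [h, if_false]
      exact ⟨contDiff_const, HasCompactSupport.zero⟩
  · intro j hj
    simp [hj.ne']

lemma PolyFam.zero (d : ℕ) : PolyFam d (0 : E → ℝ) (fun _ _ => 0) :=
  ⟨fun _ => 0, fun _ => ⟨contDiff_const, HasCompactSupport.zero⟩, rfl, fun _ _ => rfl, by simp⟩

lemma PolyFam.add {d : ℕ} {a b : E → ℝ} {F G : ℝ → E → ℝ} (hF : PolyFam d a F)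
    (hG : PolyFam d b G) : PolyFam d (fun x => a x + b x) (fun t x => F t x + G t x) := by
  obtain ⟨f, hf, rfl, hf0, hF⟩ := hF
  obtain ⟨g, hg, rfl, hg0, hG⟩ := hG
  refine ⟨fun j x => f j x + g j x, fun j => ⟨(hf j).1.add (hg j).1, (hf j).2.add (hg j).2⟩, rfl,
    fun j hj => by ext x; simp [hf0 j hj, hg0 j hj], fun t x => ?_⟩
  beta_reduce
  rw [hF, hG, ← Finset.sum_add_distrib]
  simp only [mul_add]

lemma PolyFam.sum {α : Type*} {d : ℕ} (s : Finset α) {a : α → E → ℝ} {F : α → ℝ → E → ℝ}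
    (h : ∀ i ∈ s, PolyFam d (a i) (F i)) :
    PolyFam d (fun x => ∑ i ∈ s, a i x) (fun t x => ∑ i ∈ s, F i t x) := by
  classical
  induction s using Finset.induction_on with
  | empty => simp only [Finset.sum_empty]; exact PolyFam.zero d
  | insert i s hi ih =>
    simp only [Finset.sum_insert hi]
    exact (h i (by simp)).add (ih fun j hj => h j (by simp [hj]))

lemma PolyFam.smul {d : ℕ} {a : E → ℝ} {F : ℝ → E → ℝ} (hF : PolyFam d a F) {c : E → ℝ}
    (hc : ContDiff ℝ (⊤ : ℕ∞) c) : PolyFam d (fun x => c x * a x) (fun t x => c x * F t x) := by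
  obtain ⟨f, hf, rfl, hf0, hF⟩ := hF
  refine ⟨fun j x => c x * f j x, fun j => ⟨hc.mul (hf j).1, (hf j).2.mul_left⟩, rfl,
    fun j hj => by ext x; simp [hf0 j hj], fun t x => ?_⟩
  beta_reduce
  rw [hF, Finset.mul_sum]
  exact Finset.sum_congr rfl fun _ _ => by ring

lemma PolyFam.mulT {d : ℕ} {a : E → ℝ} {F : ℝ → E → ℝ} (hF : PolyFam d a F) :
    PolyFam (d + 1) a (fun t x => t * F t x) := by
  obtain ⟨f, hf, rfl, hf0, hF⟩ := hF
  refine ⟨fun j => if j = 0 then 0 else f (j - 1), fun j => ?_, by simp, ?_, fun t x => ?_⟩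
  · by_cases h : j = 0
    · simp only [h, if_true]
      exact ⟨contDiff_const, HasCompactSupport.zero⟩
    · simpa only [h, if_false] using hf _
  · intro j hj
    simp only [show j ≠ 0 by omega, if_false]
    exact hf0 _ (by omega)
  · beta_reduce
    rw [Finset.sum_range_succ', hF, Finset.mul_sum]
    simp [pow_succ]
    exact Finset.sum_congr rfl fun _ _ => by ring

lemma PolyFam.lift {d e : ℕ} {a : E → ℝ} {F : ℝ → E → ℝ} (hF : PolyFam d a F) (h : d < e) :
    PolyFam e 0 F := by
  obtain ⟨f, hf, rfl, hf0, hF⟩ := hF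
  refine ⟨f, hf, hf0 e h, fun j hj => hf0 j (by omega), fun t x => ?_⟩
  rw [hF]
  refine Finset.sum_subset (Finset.range_mono (by omega)) fun j _ hj => ?_
  rw [hf0 j (by simpa using hj)]
  simp

lemma PolyFam.differentiable {d : ℕ} {a : E → ℝ} {F : ℝ → E → ℝ} (hF : PolyFam d a F) (t : ℝ) :
    Differentiable ℝ (F t) := by
  obtain ⟨f, hf, rfl, hf0, hF⟩ := hF
  rw [show F t = fun x => ∑ j ∈ Finset.range (d + 1), t ^ j * f j x from funext (hF t)]
  have := fun j => (hf j).1.differentiable (by simp)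
  fun_prop

lemma PolyFam.fderiv {d : ℕ} {a : E → ℝ} {F : ℝ → E → ℝ} (hF : PolyFam d a F) (v : E) :
    PolyFam d (fun x => fderiv ℝ a x v) (fun t x => fderiv ℝ (F t) x v) := by
  obtain ⟨f, hf, rfl, hf0, hF⟩ := hF
  refine ⟨fun j x => _root_.fderiv ℝ (f j) x v, fun j => ⟨cd_fderiv (hf j).1 v,
    hcs_fderiv (hf j).2 v⟩, rfl,
    fun j hj => by ext x; simp [hf0 j hj], fun t x => ?_⟩
  beta_reduce
  rw [show F t = fun x => ∑ j ∈ Finset.range (d + 1), t ^ j * f j x from funext (hF t)]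
  have := fun j => (hf j).1.differentiable (by simp)
  rw [fderiv_fun_sum (fun j _ => by fun_prop)]
  simp only [ContinuousLinearMap.sum_apply]
  refine Finset.sum_congr rfl fun j _ => ?_
  rw [fderiv_const_mul (this j x)]
  simp

lemma fderiv_exp_mul (φ : E →L[ℝ] ℝ) (t : ℝ) {f : E → ℝ} (hf : Differentiable ℝ f) (x v : E) :
    fderiv ℝ (fun y => Real.exp (t * φ y) * f y) x v =
      Real.exp (t * φ x) * (fderiv ℝ f x v + φ v * (t * f x)) := by
  have h1 : HasFDerivAt (fun y => Real.exp (t * φ y)) (Real.exp (t * φ x) • (t • φ)) x :=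
    ((φ.hasFDerivAt (x := x)).const_mul t).exp
  rw [(h1.fun_mul (hf x).hasFDerivAt).fderiv]
  simp
  ring

lemma contDiff_exp_mul (φ : E →L[ℝ] ℝ) (t : ℝ) {f : E → ℝ} (hf : ContDiff ℝ (⊤ : ℕ∞) f) :
    ContDiff ℝ (⊤ : ℕ∞) (fun y => Real.exp (t * φ y) * f y) :=
  ((contDiff_const.mul φ.contDiff).exp).mul hf

lemma PolyFam.iter (φ : E →L[ℝ] ℝ) {f : E → ℝ} (hf : ContDiff ℝ (⊤ : ℕ∞) f)
    (hc : HasCompactSupport f) (k : ℕ) : ∀ m : Fin k → E,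
    ∃ F, PolyFam k (fun x => (∏ i, φ (m i)) * f x) F ∧ ∀ t x,
      iteratedFDeriv ℝ k (fun y => Real.exp (t * φ y) * f y) x m = Real.exp (t * φ x) * F t x := by
  induction k with
  | zero =>
    intro m
    exact ⟨_, by simpa using PolyFam.const hf hc, fun t x => by simp⟩
  | succ k ih =>
    intro m
    obtain ⟨F, hF, h⟩ := ih (Fin.tail m)
    refine ⟨fun t x => _root_.fderiv ℝ (F t) x (m 0) + φ (m 0) * (t * F t x), ?_,
      fun t x => ?_⟩
    rotate_left
    · rw [DifferentiableAt.iteratedFDeriv_succ_apply_left']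
      · change _root_.fderiv ℝ (fun y => iteratedFDeriv ℝ k _ y (Fin.tail m)) x (m 0) = _
        simp only [h]
        exact fderiv_exp_mul φ t (hF.differentiable t) x (m 0)
      · exact ((contDiff_exp_mul φ t hf).differentiable_iteratedFDeriv
          (by exact_mod_cast WithTop.coe_lt_top _)) x
    · have := ((hF.fderiv (m 0)).lift (Nat.lt_succ_self k)).add
        (hF.mulT.smul (c := fun _ => φ (m 0)) contDiff_const)
      convert this using 2 with x
      simp [Fin.prod_univ_succ, Fin.tail, mul_assoc]

lemma PolyFam.integral_top [MeasurableSpace E] [BorelSpace E] {μ : Measure E}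
    [IsFiniteMeasureOnCompacts μ] {d : ℕ} {a : E → ℝ} {F : ℝ → E → ℝ} (hF : PolyFam d a F)
    (h : ∀ t, ∫ x, F t x ∂μ = 0) : ∫ x, a x ∂μ = 0 := by
  obtain ⟨f, hf, rfl, hf0, hF⟩ := hF
  let q : Polynomial ℝ := ∑ j ∈ Finset.range (d + 1), Polynomial.monomial j (∫ x, f j x ∂μ)
  have hq : q = 0 := by
    apply Polynomial.funext
    intro t
    have := h t
    simp only [hF] at this
    rw [integral_finsetSum _ (fun j _ => ((hf j).1.continuous.integrable_of_hasCompactSupport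
      (hf j).2).const_mul _)] at this
    simp only [integral_const_mul] at this
    simp only [q, Polynomial.eval_finsetSum, Polynomial.eval_monomial, Polynomial.eval_zero]
    rw [← this]
    exact Finset.sum_congr rfl fun _ _ => mul_comm _ _
  have := congrArg (fun r => Polynomial.coeff r d) hq
  simpa [q, Polynomial.finsetSum_coeff, Polynomial.coeff_monomial] using this

end PF

lemma polarize {N n : ℕ} (T : (Fin N → Fin n) → ℝ)
    (h : ∀ ξ : Fin n → ℝ, ∑ k : Fin N → Fin n, T k * ∏ i, ξ (k i) = 0) (ι : Fin N → Fin n) :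
    ∑ π : Equiv.Perm (Fin N), T (ι ∘ π) = 0 := by
  classical
  let q : MvPolynomial (Fin N) ℝ := ∑ f : Fin N → Fin N,
    MvPolynomial.monomial (∑ i, Finsupp.single (f i) 1) (T (ι ∘ f))
  have hq : q = 0 := by
    apply MvPolynomial.funext
    intro t
    have := h (fun μ => ∑ i, if ι i = μ then t i else 0)
    simp only [Finset.prod_univ_sum, Fintype.piFinset_univ, Finset.mul_sum] at this
    rw [Finset.sum_comm] at this
    rw [map_zero, ← this]
    simp only [q, map_sum]
    refine Finset.sum_congr rfl fun f _ => ?_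
    rw [Finset.sum_eq_single (ι ∘ f)]
    · simp only [MvPolynomial.monomial_sum_index, Function.comp_apply, if_true]
      simp [MvPolynomial.eval_monomial]
    · intro k _ hk
      obtain ⟨i, hi⟩ := Function.ne_iff.1 hk
      rw [Finset.prod_eq_zero (Finset.mem_univ i), mul_zero]
      exact if_neg fun h' => hi h'.symm
    · simp
  have h1 := congrArg (MvPolynomial.coeff (∑ i : Fin N, Finsupp.single i 1)) hq
  simp only [q, MvPolynomial.coeff_sum, MvPolynomial.coeff_monomial, MvPolynomial.coeff_zero] at h1
  rw [← Finset.sum_filter] at h1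
  rw [← h1]
  refine Finset.sum_bij (fun π _ => ⇑π) ?_ ?_ ?_ ?_
  · intro π _
    simp only [Finset.mem_filter, Finset.mem_univ, true_and]
    exact Equiv.sum_comp π (fun i => Finsupp.single i 1)
  · intro a _ b _ hab
    exact DFunLike.coe_injective hab
  · intro f hf
    simp only [Finset.mem_filter, Finset.mem_univ, true_and] at hf
    have hs : Function.Surjective f := by
      intro j
      have := DFunLike.congr_fun hf j
      by_contra hne
      push Not at hne
      simp [Finsupp.finsetSum_apply, Finsupp.single_apply, hne] at this
    exact ⟨Equiv.ofBijective f (Finite.surjective_iff_bijective.1 hs), by simp, rfl⟩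
  · intros; rfl

/-- if the bidifferential expression
`∫ Σ_{m=0}^p β_m^{μ ν_1…ν_m σ} ∂_μ h₁ ∂_{ν_1}⋯∂_{ν_m}∂_σ h₂` vanishes for all smooth
compactly supported `h₁, h₂`, then the weight-one total symmetrization of the top
coefficient `β_p` over all of its `p+2` indices vanishes identically. -/
theorem top_coefficient_symmetrization_vanishes
    (n p : ℕ) (hn : 1 ≤ n)
    (β : (m : ℕ) → Fin n → (Fin m → Fin n) → Fin n → (Fin n → ℝ) → ℝ)
    (hsmooth : ∀ m ≤ p, ∀ (μ : Fin n) (ν : Fin m → Fin n) (σ : Fin n),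
      ContDiff ℝ (⊤ : ℕ∞) (β m μ ν σ))
    (hsymν : ∀ m ≤ p, ∀ (μ : Fin n) (ν : Fin m → Fin n) (σ : Fin n) (x : Fin n → ℝ)
      (π : Equiv.Perm (Fin m)), β m μ (ν ∘ π) σ x = β m μ ν σ x)
    (hint : ∀ h₁ h₂ : (Fin n → ℝ) → ℝ,
      ContDiff ℝ (⊤ : ℕ∞) h₁ → HasCompactSupport h₁ →
      ContDiff ℝ (⊤ : ℕ∞) h₂ → HasCompactSupport h₂ →
      ∫ x : Fin n → ℝ,
        ∑ m ∈ Finset.range (p + 1), ∑ μ : Fin n, ∑ σ : Fin n, ∑ ν : Fin m → Fin n,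
          β m μ ν σ x * fderiv ℝ h₁ x (Pi.single μ (1 : ℝ)) *
            iteratedFDeriv ℝ (m + 1) h₂ x
              (fun i : Fin (m + 1) => Pi.single ((Fin.snoc ν σ : Fin (m + 1) → Fin n) i) (1 : ℝ))
        = 0) :
    ∀ (ι : Fin (p + 2) → Fin n) (x : Fin n → ℝ),
      (∑ π : Equiv.Perm (Fin (p + 2)),
          β p ((ι ∘ π) 0) (fun i : Fin p => (ι ∘ π) i.succ.castSucc)
            ((ι ∘ π) (Fin.last (p + 1))) x)
        / (Nat.factorial (p + 2) : ℝ) = 0 := by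
  intro ι x₀
  have key : ∀ (φ : (Fin n → ℝ) →L[ℝ] ℝ) (χ ψ : (Fin n → ℝ) → ℝ),
      ContDiff ℝ (⊤ : ℕ∞) χ → HasCompactSupport χ →
      ContDiff ℝ (⊤ : ℕ∞) ψ → HasCompactSupport ψ →
      ∫ x, ψ x • (χ x * ∑ μ : Fin n, ∑ σ : Fin n, ∑ ν : Fin p → Fin n, β p μ ν σ x *
        (φ (Pi.single μ 1) * ∏ i, φ (Pi.single ((Fin.snoc ν σ : Fin (p + 1) → Fin n) i) 1))) = 0 := by
    intro φ χ ψ hχ hχc hψ hψc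
    have term : ∀ m ≤ p, ∀ μ σ (ν : Fin m → Fin n),
        PolyFam (m + 2) (fun x => β m μ ν σ x * (φ (Pi.single μ 1) * χ x) *
          ((∏ i, (-φ) (Pi.single ((Fin.snoc ν σ : Fin (m + 1) → Fin n) i) 1)) * ψ x))
          (fun t x => β m μ ν σ x *
            fderiv ℝ (fun y => Real.exp (t * φ y) * χ y) x (Pi.single μ (1 : ℝ)) *
            iteratedFDeriv ℝ (m + 1) (fun y => Real.exp (t * (-φ) y) * ψ y) x
              (fun i : Fin (m + 1) =>
                Pi.single ((Fin.snoc ν σ : Fin (m + 1) → Fin n) i) (1 : ℝ))) := by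
      intro m hm μ σ ν
      obtain ⟨F, hF, h⟩ := PolyFam.iter (-φ) hψ hψc (m + 1) (fun i : Fin (m + 1) =>
                Pi.single ((Fin.snoc ν σ : Fin (m + 1) → Fin n) i) (1 : ℝ))
      have hb := hsmooth m hm μ ν σ
      have := (hF.mulT.smul (hb.mul (contDiff_const (c := φ (Pi.single μ 1)) |>.mul hχ))).add
        ((hF.smul (hb.mul (cd_fderiv hχ (Pi.single μ 1)))).lift (Nat.lt_succ_self _))
      convert this using 1
      · ext x
        simp
      · ext t x
        rw [h, fderiv_exp_mul φ t (hχ.differentiable (by simp))]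
        have he : Real.exp (t * φ x) * Real.exp (t * (-φ) x) = 1 := by
          rw [← Real.exp_add]; simp
        linear_combination (β m μ ν σ x * (fderiv ℝ χ x (Pi.single μ 1) +
          φ (Pi.single μ 1) * (t * χ x)) * F t x) * he
    have lower : PolyFam (p + 2) _ _ := PolyFam.sum (Finset.range p) fun m hm =>
      (PolyFam.sum (d := m + 2) Finset.univ fun μ _ => PolyFam.sum Finset.univ fun σ _ =>
        PolyFam.sum Finset.univ fun ν _ => term m (by simp at hm; omega) μ σ ν).lift
          (e := p + 2) (by simp at hm; omega)
    have top := (PolyFam.sum (d := p + 2) Finset.univ fun μ _ => PolyFam.sum Finset.univ fun σ _ =>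
        PolyFam.sum Finset.univ fun ν _ => term p le_rfl μ σ ν)
    have := (lower.add top).integral_top (μ := volume) (fun t => by
      rw [← hint (fun y => Real.exp (t * φ y) * χ y) (fun y => Real.exp (t * (-φ) y) * ψ y)
        (contDiff_exp_mul _ _ hχ) hχc.mul_left (contDiff_exp_mul _ _ hψ) hψc.mul_left]
      simp only [Finset.sum_range_succ])
    simp only [Pi.zero_apply, Finset.sum_const_zero, zero_add] at this
    have h2 := congrArg (fun r => (-1 : ℝ) ^ (p + 1) * r) this
    simp only [mul_zero, ← integral_const_mul] at h2
    rw [← h2]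
    refine integral_congr_ae (Filter.Eventually.of_forall fun x => ?_)
    simp only [smul_eq_mul, Finset.mul_sum]
    refine Finset.sum_congr rfl fun μ _ => Finset.sum_congr rfl fun σ _ =>
      Finset.sum_congr rfl fun ν _ => ?_
    have hp : ((-1 : ℝ) ^ (p + 1)) * (-1) ^ (p + 1) = 1 := by
      rw [← mul_pow]; simp
    simp only [ContinuousLinearMap.neg_apply, Finset.prod_neg, Finset.card_univ, Fintype.card_fin]
    linear_combination (-(β p μ ν σ x * φ (Pi.single μ 1) * χ x * ψ x *
      ∏ i, φ (Pi.single ((Fin.snoc ν σ : Fin (p + 1) → Fin n) i) 1))) * hp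
  have sym : ∀ φ : (Fin n → ℝ) →L[ℝ] ℝ,
      ∑ μ : Fin n, ∑ σ : Fin n, ∑ ν : Fin p → Fin n, β p μ ν σ x₀ *
        (φ (Pi.single μ 1) *
          ∏ i, φ (Pi.single ((Fin.snoc ν σ : Fin (p + 1) → Fin n) i) 1)) = 0 := by
    intro φ
    let χ : ContDiffBump x₀ := ⟨1, 2, by norm_num, by norm_num⟩
    have hcont : Continuous (fun x => χ x * ∑ μ : Fin n, ∑ σ : Fin n, ∑ ν : Fin p → Fin n,
        β p μ ν σ x * (φ (Pi.single μ 1) *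
          ∏ i, φ (Pi.single ((Fin.snoc ν σ : Fin (p + 1) → Fin n) i) 1))) := by
      have h1 := fun μ ν σ => (hsmooth p le_rfl μ ν σ).continuous
      have h2 := χ.continuous
      fun_prop
    have hae := ae_eq_zero_of_integral_contDiff_smul_eq_zero (μ := volume)
      hcont.locallyIntegrable (fun g hg hgc => key φ χ g χ.contDiff χ.hasCompactSupport hg hgc)
    have hz := (hcont.ae_eq_iff_eq volume (continuous_const (y := (0 : ℝ)))).1 hae
    have hx := congrFun hz x₀
    have h1 : χ x₀ = 1 := χ.one_of_mem_closedBall (by simp [χ])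
    simpa only [h1, one_mul] using hx
  have hpol := polarize (N := p + 2) (fun k => β p (k 0) (fun i : Fin p => k i.succ.castSucc)
    (k (Fin.last (p + 1))) x₀) (fun ξ => by
      have := sym (∑ j, ξ j • ContinuousLinearMap.proj j)
      rw [← this, ← (Fin.consEquiv (fun _ : Fin (p + 2) => Fin n)).sum_comp,
        Fintype.sum_prod_type]
      refine Finset.sum_congr rfl fun μ _ => ?_
      rw [← (Fin.snocEquiv (fun _ : Fin (p + 1) => Fin n)).sum_comp, Fintype.sum_prod_type]
      refine Finset.sum_congr rfl fun σ _ => Finset.sum_congr rfl fun ν _ => ?_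
      have e1 : ∀ i : Fin p, (Fin.cons μ (Fin.snoc ν σ : Fin (p + 1) → Fin n) :
          Fin (p + 2) → Fin n) i.succ.castSucc = ν i := by
        intro i
        rw [← Fin.succ_castSucc, Fin.cons_succ, Fin.snoc_castSucc]
      have e2 : (Fin.cons μ (Fin.snoc ν σ : Fin (p + 1) → Fin n) :
          Fin (p + 2) → Fin n) (Fin.last (p + 1)) = σ := by
        rw [← Fin.succ_last, Fin.cons_succ, Fin.snoc_last]
      have e3 : ∀ μ, (∑ j, ξ j • (ContinuousLinearMap.proj j : (Fin n → ℝ) →L[ℝ] ℝ))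
          (Pi.single μ 1) = ξ μ := by
        intro μ
        simp [ContinuousLinearMap.sum_apply, Pi.single_apply]
      simp only [Fin.consEquiv, Fin.snocEquiv, Equiv.coe_fn_mk, e1, e2, e3, Fin.prod_univ_succ (n := p + 1),
        Fin.cons_zero, Fin.cons_succ]) ι
  rw [hpol, zero_div]
end

section
/- Let n ≥ 1, let p with 1 ≤ p ≤ n and k ≥ 0, and let A be a real array with components A_{μ_1…μ_p}{}^{ν_1…ν_k} (all indices in {1,…,n}), totally antisymmetric in the lower indices μ_1,…,μ_p and totally symmetric in the upper indices ν_1,…,ν_k. Suppose that the array obtained from A_{μ_1…μ_p}{}^{ν_1…ν_k} δ_γ{}^δ by weight-one antisymmetrization over the p+1 lower indices (μ_1,…,μ_p,γ) and weight-one symmetrization over the k+1 upper indices (ν_1,…,ν_k,δ) vanishes identically. Then (n + k − p) · A_{μ_1…μ_p}{}^{ν_1…ν_k} = k·p · S, where S is the array obtained by weight-one antisymmetrization over μ_1,…,μ_p and weight-one symmetrization over ν_1,…,ν_k of δ_{μ_1}{}^{ν_1} · Σ_{γ=1}^n A_{γ μ_2…μ_p}{}^{γ ν_2…ν_k}. In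 particular, if k = 0 and p < n then A = 0. -/
open Equiv in
theorem aux_sum_perm {α : Type*} [Fintype α] [DecidableEq α] (a : α) (F : α → ℝ) :
    (Fintype.card α : ℝ) * ∑ π : Equiv.Perm α, F (π a)
      = ((Fintype.card α).factorial : ℝ) * ∑ i, F i := by
  have h1 : ∀ b : α, ∑ π : Equiv.Perm α, F (π b) = ∑ π : Equiv.Perm α, F (π a) := by
    intro b
    rw [← Equiv.sum_comp (Equiv.mulRight (Equiv.swap a b))]
    simp
  have h2 : ∑ b : α, ∑ π : Equiv.Perm α, F (π b) = ∑ π : Equiv.Perm α, ∑ b : α, F b := by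
    rw [Finset.sum_comm]
    refine Finset.sum_congr rfl fun π _ => ?_
    exact Equiv.sum_comp π F
  simp only [h1] at h2
  simpa [Fintype.card_perm] using h2

theorem aux_sum_perm2 {α β : Type*} [Fintype α] [DecidableEq α] [Fintype β] [DecidableEq β]
    (a : α) (b : β) (F : α → β → ℝ) :
    (Fintype.card α : ℝ) * (Fintype.card β : ℝ) *
        ∑ π : Equiv.Perm α, ∑ τ : Equiv.Perm β, F (π a) (τ b)
      = ((Fintype.card α).factorial : ℝ) * ((Fintype.card β).factorial : ℝ) *
        ∑ i, ∑ j, F i j := by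
  have h1 := aux_sum_perm a (fun i => ∑ τ : Equiv.Perm β, F i (τ b))
  have h2 : ∀ i, _ := fun i => aux_sum_perm b (F i)
  calc _ = (Fintype.card β : ℝ) * ((Fintype.card α : ℝ) *
        ∑ π : Equiv.Perm α, ∑ τ : Equiv.Perm β, F (π a) (τ b)) := by ring
    _ = ((Fintype.card α).factorial : ℝ) *
        ∑ i, (Fintype.card β : ℝ) * ∑ τ : Equiv.Perm β, F i (τ b) := by
          rw [h1, ← Finset.mul_sum]; ring
    _ = _ := by
          simp only [h2]
          rw [← Finset.mul_sum]; ring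

theorem aux_restrict (p : ℕ) (ρ' : Equiv.Perm (Fin (p + 1))) (h : ρ' (Fin.last p) = Fin.last p) :
    ∃ ρ : Equiv.Perm (Fin p), (∀ i, ρ' i.castSucc = (ρ i).castSucc) ∧
      Equiv.Perm.sign ρ' = Equiv.Perm.sign ρ := by
  have hs : ∀ x, ρ' x ≠ Fin.last p ↔ x ≠ Fin.last p := by
    intro x
    rw [not_iff_not]
    constructor
    · intro hx; exact ρ'.injective (hx.trans h.symm)
    · rintro rfl; exact h
  let e : Fin p ≃ {x : Fin (p + 1) // x ≠ Fin.last p} := finSuccAboveEquiv (Fin.last p)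
  have he : ∀ i, ((e i : {x : Fin (p + 1) // x ≠ Fin.last p}) : Fin (p + 1)) = i.castSucc := by
    intro i; simp [e, finSuccAboveEquiv_apply]
  refine ⟨e.symm.permCongr (ρ'.subtypePerm hs), ?_, ?_⟩
  · intro i
    simp only [Equiv.permCongr_apply, Equiv.symm_symm]
    rw [← he (e.symm _), Equiv.apply_symm_apply]
    simp [he]
  · rw [Equiv.Perm.sign_permCongr, Equiv.Perm.sign_subtypePerm]
    rintro x hx rfl
    exact hx h

theorem aux_coset (p : ℕ) (π : Equiv.Perm (Fin (p + 1))) :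
    ∃ ρ : Equiv.Perm (Fin p),
      (∀ i, π i.castSucc = Equiv.swap (π (Fin.last p)) (Fin.last p) (ρ i).castSucc) ∧
      Equiv.Perm.sign π =
        Equiv.Perm.sign (Equiv.swap (π (Fin.last p)) (Fin.last p)) * Equiv.Perm.sign ρ := by
  obtain ⟨ρ, h1, h2⟩ := aux_restrict p (Equiv.swap (π (Fin.last p)) (Fin.last p) * π) (by simp)
  refine ⟨ρ, fun i => ?_, ?_⟩
  · rw [← h1]; simp
  · rw [← h2, Equiv.Perm.sign_mul, ← mul_assoc, ← Equiv.Perm.sign_mul]; simp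

theorem aux_sign_sq {α : Type*} [Fintype α] [DecidableEq α] (π : Equiv.Perm α) :
    ((Equiv.Perm.sign π : ℤ) : ℝ) * ((Equiv.Perm.sign π : ℤ) : ℝ) = 1 := by
  rcases Int.units_eq_one_or (Equiv.Perm.sign π) with h | h <;> simp [h]

theorem aux_snoc_swap {n p : ℕ} (μ : Fin p → Fin n) (γ : Fin n) (i : Fin p) :
    (fun t : Fin p => (Fin.snoc μ γ : Fin (p + 1) → Fin n)
      (Equiv.swap i.castSucc (Fin.last p) t.castSucc)) = Function.update μ i γ := by
  funext t
  by_cases h : t = i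
  · subst h; simp
  · rw [Equiv.swap_apply_of_ne_of_ne]
    · simp [h]
    · simpa using h
    · exact (Fin.castSucc_lt_last t).ne

theorem aux_contract (n p k : ℕ)
    (A : (Fin p → Fin n) → (Fin k → Fin n) → ℝ)
    (hanti : ∀ (μ : Fin p → Fin n) (ν : Fin k → Fin n) (π : Equiv.Perm (Fin p)),
      A (μ ∘ π) ν = ((Equiv.Perm.sign π : ℤ) : ℝ) * A μ ν)
    (hsym : ∀ (μ : Fin p → Fin n) (ν : Fin k → Fin n) (τ : Equiv.Perm (Fin k)),
      A μ (ν ∘ τ) = A μ ν)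
    (μ' : Fin (p + 1) → Fin n) (ν' : Fin (k + 1) → Fin n)
    (hv : (∑ π : Equiv.Perm (Fin (p + 1)), ∑ τ : Equiv.Perm (Fin (k + 1)),
          ((Equiv.Perm.sign π : ℤ) : ℝ) *
            (A (fun i : Fin p => (μ' ∘ π) i.castSucc) (fun j : Fin k => (ν' ∘ τ) j.castSucc) *
              (if (μ' ∘ π) (Fin.last p) = (ν' ∘ τ) (Fin.last k) then (1 : ℝ) else 0)))
        / ((Nat.factorial (p + 1) : ℝ) * (Nat.factorial (k + 1) : ℝ)) = 0) :
    ∑ i : Fin (p + 1), ∑ j : Fin (k + 1),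
      ((Equiv.Perm.sign (Equiv.swap i (Fin.last p)) : ℤ) : ℝ) *
        (A (fun t : Fin p => μ' (Equiv.swap i (Fin.last p) t.castSucc))
          (fun t : Fin k => ν' (Equiv.swap j (Fin.last k) t.castSucc)) *
          (if μ' i = ν' j then (1 : ℝ) else 0)) = 0 := by
  have hne : ((Nat.factorial (p + 1) : ℝ) * (Nat.factorial (k + 1) : ℝ)) ≠ 0 := by positivity
  rw [div_eq_zero_iff, or_iff_left hne] at hv
  have key := aux_sum_perm2 (Fin.last p) (Fin.last k) (fun i j =>
      ((Equiv.Perm.sign (Equiv.swap i (Fin.last p)) : ℤ) : ℝ) *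
        (A (fun t : Fin p => μ' (Equiv.swap i (Fin.last p) t.castSucc))
          (fun t : Fin k => ν' (Equiv.swap j (Fin.last k) t.castSucc)) *
          (if μ' i = ν' j then (1 : ℝ) else 0)))
  simp only [Fintype.card_fin] at key
  have heq : ∀ (π : Equiv.Perm (Fin (p + 1))) (τ : Equiv.Perm (Fin (k + 1))),
      ((Equiv.Perm.sign π : ℤ) : ℝ) *
            (A (fun i : Fin p => (μ' ∘ π) i.castSucc) (fun j : Fin k => (ν' ∘ τ) j.castSucc) *
              (if (μ' ∘ π) (Fin.last p) = (ν' ∘ τ) (Fin.last k) then (1 : ℝ) else 0))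
      = ((Equiv.Perm.sign (Equiv.swap (π (Fin.last p)) (Fin.last p)) : ℤ) : ℝ) *
        (A (fun t : Fin p => μ' (Equiv.swap (π (Fin.last p)) (Fin.last p) t.castSucc))
          (fun t : Fin k => ν' (Equiv.swap (τ (Fin.last k)) (Fin.last k) t.castSucc)) *
          (if μ' (π (Fin.last p)) = ν' (τ (Fin.last k)) then (1 : ℝ) else 0)) := by
    intro π τ
    obtain ⟨ρ, h1, h2⟩ := aux_coset p π
    obtain ⟨σ, h3, -⟩ := aux_coset k τ
    have e1 : (fun i : Fin p => (μ' ∘ π) i.castSucc) =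
        (fun t : Fin p => μ' (Equiv.swap (π (Fin.last p)) (Fin.last p) t.castSucc)) ∘ ρ := by
      funext i; simp only [Function.comp, h1]
    have e2 : (fun i : Fin k => (ν' ∘ τ) i.castSucc) =
        (fun t : Fin k => ν' (Equiv.swap (τ (Fin.last k)) (Fin.last k) t.castSucc)) ∘ σ := by
      funext i; simp only [Function.comp, h3]
    rw [e1, e2, hanti, hsym, h2]
    have h4 := aux_sign_sq ρ
    simp only [Function.comp]
    push_cast
    linear_combination (((Equiv.Perm.sign (Equiv.swap (π (Fin.last p)) (Fin.last p)) : ℤ) : ℝ) *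
        (A (fun t : Fin p => μ' (Equiv.swap (π (Fin.last p)) (Fin.last p) t.castSucc))
          (fun t : Fin k => ν' (Equiv.swap (τ (Fin.last k)) (Fin.last k) t.castSucc)) *
          (if μ' (π (Fin.last p)) = ν' (τ (Fin.last k)) then (1 : ℝ) else 0))) * h4
  simp only [heq] at hv
  rw [hv, mul_zero] at key
  exact (mul_eq_zero.mp key.symm).resolve_left hne

theorem aux_main (n p k : ℕ)
    (A : (Fin p → Fin n) → (Fin k → Fin n) → ℝ)
    (h : ∀ (μ' : Fin (p + 1) → Fin n) (ν' : Fin (k + 1) → Fin n),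
    ∑ i : Fin (p + 1), ∑ j : Fin (k + 1),
      ((Equiv.Perm.sign (Equiv.swap i (Fin.last p)) : ℤ) : ℝ) *
        (A (fun t : Fin p => μ' (Equiv.swap i (Fin.last p) t.castSucc))
          (fun t : Fin k => ν' (Equiv.swap j (Fin.last k) t.castSucc)) *
          (if μ' i = ν' j then (1 : ℝ) else 0)) = 0)
    (μ : Fin p → Fin n) (ν : Fin k → Fin n) :
    ((n : ℝ) + (k : ℝ) - (p : ℝ)) * A μ ν
      = ∑ i : Fin p, ∑ j : Fin k, (if μ i = ν j then (1 : ℝ) else 0) *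
          ∑ γ : Fin n, A (Function.update μ i γ) (Function.update ν j γ) := by
  have h0 : ∀ γ : Fin n, _ := fun γ => h (Fin.snoc μ γ) (Fin.snoc ν γ)
  have hs : ∀ i : Fin p, Equiv.Perm.sign (Equiv.swap i.castSucc (Fin.last p)) = -1 :=
    fun i => Equiv.Perm.sign_swap (Fin.castSucc_lt_last i).ne
  simp only [Fin.sum_univ_castSucc, aux_snoc_swap, hs, Fin.snoc_castSucc, Fin.snoc_last,
    Equiv.swap_self, Equiv.Perm.sign_refl, Equiv.refl_apply] at h0
  have h1 : ∑ γ : Fin n, _ = ∑ γ : Fin n, (0 : ℝ) := Finset.sum_congr rfl fun γ _ => h0 γ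
  have e1 : ∑ γ : Fin n, ∑ j : Fin k, A μ (Function.update ν j γ) *
      (if γ = ν j then (1 : ℝ) else 0) = k * A μ ν := by
    rw [Finset.sum_comm]; simp
  have e2 : ∑ γ : Fin n, ∑ i : Fin p, A (Function.update μ i γ) ν *
      (if μ i = γ then (1 : ℝ) else 0) = p * A μ ν := by
    rw [Finset.sum_comm]; simp
  have e3 : ∑ γ : Fin n, ∑ i : Fin p, ∑ j : Fin k,
      A (Function.update μ i γ) (Function.update ν j γ) * (if μ i = ν j then (1 : ℝ) else 0)
      = ∑ i : Fin p, ∑ j : Fin k, (if μ i = ν j then (1 : ℝ) else 0) *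
          ∑ γ : Fin n, A (Function.update μ i γ) (Function.update ν j γ) := by
    rw [Finset.sum_comm]
    refine Finset.sum_congr rfl fun i _ => ?_
    rw [Finset.sum_comm]
    refine Finset.sum_congr rfl fun j _ => ?_
    rw [Finset.mul_sum]
    exact Finset.sum_congr rfl fun γ _ => mul_comm _ _
  rw [← e3]
  simp only [Units.val_neg, Units.val_one, Int.cast_neg, Int.cast_one, neg_mul, one_mul,
    Finset.sum_add_distrib, Finset.sum_neg_distrib, if_true, mul_one, Finset.sum_const,
    Finset.card_univ, Fintype.card_fin, nsmul_eq_mul, e1, e2, mul_zero] at h1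
  linarith

theorem aux_update {n p : ℕ} (μ : Fin p → Fin n) (π : Equiv.Perm (Fin p)) (a : Fin p) (γ : Fin n) :
    Function.update (μ ∘ π) a γ = Function.update μ (π a) γ ∘ π := by
  funext t
  simp [Function.update_apply]


/-- the contracted tensor identity from the proof of the Algebraic
Poincaré Lemma. `A` is antisymmetric in its `p` lower indices and symmetric in its
`k` upper indices; if the weight-one antisymmetrization over the `p+1` lower indices
and symmetrization over the `k+1` upper indices of `A_{μ_1…μ_p}{}^{ν_1…ν_k} δ_γ{}^δ`
vanishes, then `(n+k-p)·A = k·p·S`, with `S` the (anti)symmetrization of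
`δ_{μ_1}{}^{ν_1} Σ_γ A_{γ μ_2…μ_p}{}^{γ ν_2…ν_k}`; in particular `A = 0` when
`k = 0` and `p < n`. -/
theorem contracted_antisymmetrization_identity
    (n p k : ℕ) (hn : 1 ≤ n) (hp : 1 ≤ p) (hpn : p ≤ n)
    (A : (Fin p → Fin n) → (Fin k → Fin n) → ℝ)
    (hanti : ∀ (μ : Fin p → Fin n) (ν : Fin k → Fin n) (π : Equiv.Perm (Fin p)),
      A (μ ∘ π) ν = ((Equiv.Perm.sign π : ℤ) : ℝ) * A μ ν)
    (hsym : ∀ (μ : Fin p → Fin n) (ν : Fin k → Fin n) (τ : Equiv.Perm (Fin k)),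
      A μ (ν ∘ τ) = A μ ν)
    (hvanish : ∀ (μ' : Fin (p + 1) → Fin n) (ν' : Fin (k + 1) → Fin n),
      (∑ π : Equiv.Perm (Fin (p + 1)), ∑ τ : Equiv.Perm (Fin (k + 1)),
          ((Equiv.Perm.sign π : ℤ) : ℝ) *
            (A (fun i : Fin p => (μ' ∘ π) i.castSucc) (fun j : Fin k => (ν' ∘ τ) j.castSucc) *
              (if (μ' ∘ π) (Fin.last p) = (ν' ∘ τ) (Fin.last k) then (1 : ℝ) else 0)))
        / ((Nat.factorial (p + 1) : ℝ) * (Nat.factorial (k + 1) : ℝ)) = 0) :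
    (∀ (μ : Fin p → Fin n) (ν : Fin k → Fin n),
      ((n : ℝ) + (k : ℝ) - (p : ℝ)) * A μ ν
        = (k : ℝ) * (p : ℝ) *
            ((∑ π : Equiv.Perm (Fin p), ∑ τ : Equiv.Perm (Fin k),
                ((Equiv.Perm.sign π : ℤ) : ℝ) *
                  (if hk : 0 < k then
                    (if (μ ∘ π) ⟨0, hp⟩ = (ν ∘ τ) ⟨0, hk⟩ then (1 : ℝ) else 0) *
                      ∑ γ : Fin n,
                        A (Function.update (μ ∘ π) ⟨0, hp⟩ γ)
                          (Function.update (ν ∘ τ) ⟨0, hk⟩ γ)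
                   else 0))
              / ((Nat.factorial p : ℝ) * (Nat.factorial k : ℝ)))) ∧
    (k = 0 → p < n → ∀ (μ : Fin p → Fin n) (ν : Fin k → Fin n), A μ ν = 0) := by
  have hmain := aux_main n p k A
    (fun μ' ν' => aux_contract n p k A hanti hsym μ' ν' (hvanish μ' ν'))
  constructor
  · intro μ ν
    rw [hmain]
    by_cases hk : 0 < k
    · have key := aux_sum_perm2 (⟨0, hp⟩ : Fin p) (⟨0, hk⟩ : Fin k) (fun i j =>
        (if μ i = ν j then (1 : ℝ) else 0) *
          ∑ γ : Fin n, A (Function.update μ i γ) (Function.update ν j γ))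
      simp only [Fintype.card_fin] at key
      have hne : ((Nat.factorial p : ℝ) * (Nat.factorial k : ℝ)) ≠ 0 := by positivity
      rw [← mul_div_assoc, eq_div_iff hne, mul_comm, ← key, mul_comm (k : ℝ)]
      congr 1
      refine Finset.sum_congr rfl fun π _ => Finset.sum_congr rfl fun τ _ => ?_
      rw [dif_pos hk]
      simp only [aux_update, hanti, hsym, ← Finset.mul_sum, Function.comp]
      have h4 := aux_sign_sq π
      linear_combination (-((if μ (π ⟨0, hp⟩) = ν (τ ⟨0, hk⟩) then (1 : ℝ) else 0) *
          ∑ γ : Fin n, A (Function.update μ (π ⟨0, hp⟩) γ)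
            (Function.update ν (τ ⟨0, hk⟩) γ))) * h4
    · obtain rfl : k = 0 := by omega
      simp
  · rintro rfl hlt μ ν
    have h := hmain μ ν
    simp only [Finset.univ_eq_empty, Finset.sum_empty, Finset.sum_const_zero] at h
    rcases mul_eq_zero.mp h with h | h
    · have : (p : ℝ) < n := by exact_mod_cast hlt
      push_cast at h
      linarith
    · exact h
end

section
/- Let n ≥ 2, let p with 1 ≤ p < n, and let k ≥ 0. For each i with 0 ≤ i ≤ k let A^i be a smooth field on ℝ^n with real components A^i{}_{μ_1…μ_p}{}^{ν_1…ν_i} (indices in {1,…,n}), totally antisymmetric in μ_1,…,μ_p and totally symmetric in ν_1,…,ν_i. For Ψ ∈ C^∞(ℝ^n, ℝ) define the p-form α[Ψ] with components α[Ψ]_{μ_1…μ_p}(x) = Σ_{i=0}^k Σ_{ν's} A^i{}_{μ_1…μ_p}{}^{ν_1…ν_i}(x) ∂_{ν_1}⋯∂_{ν_i}Ψ(x). Suppose that α[Ψ] is closed for every Ψ, i.e. Σ_{j=0}^{p} (−1)^j ∂_{μ_j} α[Ψ]_{μ_0…\hat{μ_j}…μ_p}(x) = 0 for all Ψ, all x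 and all index choices μ_0,…,μ_p (hat denoting omission). Then there exist smooth fields B^i (0 ≤ i ≤ k) with components B^i{}_{μ_2…μ_p}{}^{ν_1…ν_i}, totally antisymmetric in the p−1 lower indices and totally symmetric in the upper indices, such that for every Ψ and every x, α[Ψ]_{μ_1…μ_p}(x) = Σ_{j=1}^{p} (−1)^{j−1} ∂_{μ_j} β[Ψ]_{μ_1…\hat{μ_j}…μ_p}(x), where β[Ψ]_{μ_2…μ_p}(x) = Σ_{i=0}^k Σ_{ν's} B^i{}_{μ_2…μ_p}{}^{ν_1…ν_i}(x) ∂_{ν_1}⋯∂_{ν_i}Ψ(x); that is, α[Ψ] = d(β[Ψ]) for every Ψ. -/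
open Finset

namespace APL

/-- partial derivative -/
noncomputable def pd {n : ℕ} (a : Fin n) (f : (Fin n → ℝ) → ℝ) (x : Fin n → ℝ) : ℝ :=
  fderiv ℝ f x (Pi.single a (1 : ℝ))

/-- iterated partial derivative -/
noncomputable def D {n : ℕ} (i : ℕ) (ν : Fin i → Fin n) (Ψ : (Fin n → ℝ) → ℝ)
    (y : Fin n → ℝ) : ℝ :=
  iteratedFDeriv ℝ i Ψ y (fun l : Fin i => Pi.single (ν l) (1 : ℝ))

/-- linear differential operator of order `< N` -/
noncomputable def Op {n : ℕ} (N : ℕ) (A : (i : ℕ) → (Fin i → Fin n) → (Fin n → ℝ) → ℝ)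
    (Ψ : (Fin n → ℝ) → ℝ) (y : Fin n → ℝ) : ℝ :=
  ∑ i ∈ Finset.range N, ∑ ν : Fin i → Fin n, A i ν y * D i ν Ψ y

/-- smoothness -/
abbrev Sm {n : ℕ} (f : (Fin n → ℝ) → ℝ) : Prop := ContDiff ℝ (⊤ : ℕ∞) f

variable {n : ℕ}

lemma Sm.diff {f : (Fin n → ℝ) → ℝ} (hf : Sm f) (x : Fin n → ℝ) : DifferentiableAt ℝ f x :=
  (ContDiff.differentiable hf (by simp)) x

lemma Sm.pd {f : (Fin n → ℝ) → ℝ} (hf : Sm f) (a : Fin n) : Sm (pd a f) := by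
  unfold APL.pd Sm
  exact ContDiff.clm_apply (ContDiff.fderiv_right hf (by simp)) contDiff_const

lemma pd_add {f g : (Fin n → ℝ) → ℝ} (hf : Sm f) (hg : Sm g) (a : Fin n) (x : Fin n → ℝ) :
    pd a (fun y => f y + g y) x = pd a f x + pd a g x := by
  unfold pd
  rw [fderiv_fun_add (hf.diff x) (hg.diff x)]; rfl

lemma pd_sub {f g : (Fin n → ℝ) → ℝ} (hf : Sm f) (hg : Sm g) (a : Fin n) (x : Fin n → ℝ) :
    pd a (fun y => f y - g y) x = pd a f x - pd a g x := by
  unfold pd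
  rw [fderiv_fun_sub (hf.diff x) (hg.diff x)]; rfl

lemma pd_mul {f g : (Fin n → ℝ) → ℝ} (hf : Sm f) (hg : Sm g) (a : Fin n) (x : Fin n → ℝ) :
    pd a (fun y => f y * g y) x = pd a f x * g x + f x * pd a g x := by
  unfold pd
  rw [fderiv_fun_mul (hf.diff x) (hg.diff x)]
  simp; ring

lemma pd_const_mul {g : (Fin n → ℝ) → ℝ} (c : ℝ) (hg : Sm g) (a : Fin n) (x : Fin n → ℝ) :
    pd a (fun y => c * g y) x = c * pd a g x := by
  unfold pd
  rw [fderiv_const_mul (hg.diff x)]; rfl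

lemma pd_sum {ι : Type*} (s : Finset ι) {f : ι → (Fin n → ℝ) → ℝ} (hf : ∀ i ∈ s, Sm (f i))
    (a : Fin n) (x : Fin n → ℝ) :
    pd a (fun y => ∑ i ∈ s, f i y) x = ∑ i ∈ s, pd a (f i) x := by
  unfold pd
  rw [fderiv_fun_sum (fun i hi => (hf i hi).diff x)]; simp

lemma sm_coord (a : Fin n) : Sm (fun y : Fin n → ℝ => y a) := contDiff_apply ℝ ℝ a

lemma pd_coord (a b : Fin n) (x : Fin n → ℝ) :
    pd b (fun y : Fin n → ℝ => y a) x = if b = a then 1 else 0 := by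
  unfold pd
  have : fderiv ℝ (fun y : Fin n → ℝ => y a) x = ContinuousLinearMap.proj a :=
    (ContinuousLinearMap.proj (R := ℝ) (φ := fun _ : Fin n => ℝ) a).fderiv
  rw [this]
  simp [Pi.single_apply, eq_comm]

lemma pd_comm {f : (Fin n → ℝ) → ℝ} (hf : Sm f) (a b : Fin n) (x : Fin n → ℝ) :
    pd a (pd b f) x = pd b (pd a f) x := by
  have hs : IsSymmSndFDerivAt ℝ f x :=
    ContDiffAt.isSymmSndFDerivAt (ContDiff.contDiffAt hf)
      (by simpa using WithTop.coe_le_coe.2 (le_top : (2 : ℕ∞) ≤ ⊤))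
  have hd : DifferentiableAt ℝ (fderiv ℝ f) x :=
    (ContDiff.differentiable (ContDiff.fderiv_right (m := 1) hf
      (WithTop.coe_le_coe.2 (le_top : (2 : ℕ∞) ≤ ⊤))) (by simp)) x
  unfold pd
  rw [fderiv_clm_apply hd (by fun_prop), fderiv_clm_apply hd (by fun_prop)]
  simp
  exact hs _ _

lemma sm_D {Ψ : (Fin n → ℝ) → ℝ} (h : Sm Ψ) (i : ℕ) (ν : Fin i → Fin n) : Sm (D i ν Ψ) := by
  have h1 : ContDiff ℝ (⊤ : ℕ∞) (iteratedFDeriv ℝ i Ψ) :=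
    ContDiff.iteratedFDeriv_right h (by exact_mod_cast le_top)
  exact (ContinuousMultilinearMap.apply ℝ (fun _ : Fin i => (Fin n → ℝ)) ℝ
    (fun l : Fin i => Pi.single (ν l) (1 : ℝ))).contDiff.comp h1

lemma pd_D {Ψ : (Fin n → ℝ) → ℝ} (h : Sm Ψ) (i : ℕ) (ν : Fin (i + 1) → Fin n) (x : Fin n → ℝ) :
    D (i + 1) ν Ψ x = pd (ν 0) (D i (fun l => ν l.succ) Ψ) x := by
  have h1 : ContDiff ℝ (⊤ : ℕ∞) (iteratedFDeriv ℝ i Ψ) :=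
    ContDiff.iteratedFDeriv_right h (by exact_mod_cast le_top)
  have h2 := (ContDiff.differentiable h1 (by simp)) x
  unfold pd D
  rw [iteratedFDeriv_succ_apply_left]
  have := ((ContinuousMultilinearMap.apply ℝ (fun _ : Fin i => (Fin n → ℝ)) ℝ
    (fun l : Fin i => Pi.single (ν l.succ) (1 : ℝ))).hasFDerivAt.comp x h2.hasFDerivAt).fderiv
  have h3 : (fun y => (iteratedFDeriv ℝ i Ψ y) fun l => Pi.single (ν l.succ) (1 : ℝ)) =
    (⇑(ContinuousMultilinearMap.apply ℝ (fun _ : Fin i => (Fin n → ℝ)) ℝ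
    (fun l : Fin i => Pi.single (ν l.succ) (1 : ℝ))) ∘ iteratedFDeriv ℝ i Ψ) := rfl
  rw [h3, this]
  rfl

lemma pd_D' {Ψ : (Fin n → ℝ) → ℝ} (h : Sm Ψ) (i : ℕ) (a : Fin n) (ν : Fin i → Fin n)
    (x : Fin n → ℝ) :
    pd a (D i ν Ψ) x = D (i + 1) (Fin.cons a ν : Fin (i + 1) → Fin n) Ψ x := by
  rw [pd_D h]; rfl

lemma sm_mulc {Ψ : (Fin n → ℝ) → ℝ} (h : Sm Ψ) (a : Fin n) : Sm (fun y => y a * Ψ y) :=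
  ContDiff.mul (sm_coord a) h

lemma D_mul_zero {Ψ : (Fin n → ℝ) → ℝ} (a : Fin n) (ν : Fin 0 → Fin n) (x : Fin n → ℝ) :
    D 0 ν (fun y => y a * Ψ y) x = x a * D 0 ν Ψ x := by
  simp [D]

lemma D_mul {Ψ : (Fin n → ℝ) → ℝ} (h : Sm Ψ) (a : Fin n) (i : ℕ) :
    ∀ (ν : Fin (i + 1) → Fin n) (x : Fin n → ℝ),
    D (i + 1) ν (fun y => y a * Ψ y) x = x a * D (i + 1) ν Ψ x +
      ∑ l : Fin (i + 1), (if ν l = a then 1 else 0) * D i (ν ∘ l.succAbove) Ψ x := by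
  induction i with
  | zero =>
    intro ν x
    rw [pd_D (sm_mulc h a)]
    have : D 0 (fun l : Fin 0 => ν l.succ) (fun y => y a * Ψ y) =
        fun y => y a * D 0 (fun l : Fin 0 => ν l.succ) Ψ y := by
      funext y; exact D_mul_zero _ _ _
    rw [this, pd_mul (sm_coord a) (sm_D h _ _), pd_coord, pd_D h]
    simp
    rw [add_comm]
    congr 1
  | succ i ih =>
    intro ν x
    rw [pd_D (sm_mulc h a)]
    have : D (i + 1) (fun l : Fin (i + 1) => ν l.succ) (fun y => y a * Ψ y) =
        fun y => y a * D (i + 1) (fun l : Fin (i + 1) => ν l.succ) Ψ y +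
          ∑ l : Fin (i + 1), (if ν l.succ = a then 1 else 0) *
            D i ((fun l : Fin (i + 1) => ν l.succ) ∘ l.succAbove) Ψ y := by
      funext y; exact ih _ _
    have hs : ∀ l : Fin (i + 1), Sm (fun y => (if ν l.succ = a then (1 : ℝ) else 0) *
            D i ((fun l : Fin (i + 1) => ν l.succ) ∘ l.succAbove) Ψ y) :=
      fun l => ContDiff.mul contDiff_const (sm_D h _ _)
    rw [this, pd_add (ContDiff.mul (sm_coord a) (sm_D h _ _)) (ContDiff.sum fun l _ => hs l),
      pd_mul (sm_coord a) (sm_D h _ _), pd_coord, pd_sum _ (fun l _ => hs l),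
      Fin.sum_univ_succ (n := i + 1), pd_D h (i + 1) ν]
    have e : ∀ l : Fin (i + 1), pd (ν 0) (fun y => (if ν l.succ = a then (1 : ℝ) else 0) *
            D i ((fun l : Fin (i + 1) => ν l.succ) ∘ l.succAbove) Ψ y) x =
        (if ν l.succ = a then (1 : ℝ) else 0) * D (i + 1) (ν ∘ l.succ.succAbove) Ψ x := by
      intro l
      rw [pd_const_mul _ (sm_D h _ _), pd_D h]
      congr 2
      simp [Fin.succ_succAbove_succ, Function.comp_def]
    rw [Finset.sum_congr rfl fun l _ => e l]
    have e0 : (ν ∘ (0 : Fin (i + 2)).succAbove) = fun l => ν l.succ := by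
      funext l; simp
    rw [e0]
    ring

lemma sym_insert {i : ℕ} (a : (Fin (i + 1) → Fin n) → ℝ)
    (ha : ∀ (ν : Fin (i + 1) → Fin n) (τ : Equiv.Perm (Fin (i + 1))), a (ν ∘ τ) = a ν)
    (l : Fin (i + 1)) (b : Fin n) (ν : Fin i → Fin n) :
    a (l.insertNth b ν) = a (Fin.cons b ν) := by
  rw [← ha (Fin.cons b ν) l.cycleRange]
  congr 1
  funext m
  refine Fin.succAboveCases l ?_ (fun m => ?_) m
  · simp
  · simp [Fin.cycleRange_succAbove]

lemma sum_sym {i : ℕ} (a : (Fin (i + 1) → Fin n) → ℝ)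
    (ha : ∀ (ν : Fin (i + 1) → Fin n) (τ : Equiv.Perm (Fin (i + 1))), a (ν ∘ τ) = a ν)
    (b : Fin n) (F : (Fin i → Fin n) → ℝ) :
    ∑ ν, a ν * ∑ l : Fin (i + 1), (if ν l = b then 1 else 0) * F (ν ∘ l.succAbove) =
      ∑ ν : Fin i → Fin n, ((i : ℝ) + 1) * a (Fin.cons b ν) * F ν := by
  simp_rw [Finset.mul_sum]
  rw [Finset.sum_comm]
  have : ∀ l : Fin (i + 1), ∑ ν, a ν * ((if ν l = b then 1 else 0) * F (ν ∘ l.succAbove)) =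
      ∑ ν : Fin i → Fin n, a (Fin.cons b ν) * F ν := by
    intro l
    rw [← (Fin.insertNthEquiv (fun _ => Fin n) l).sum_comp, Fintype.sum_prod_type,
      Finset.sum_eq_single b]
    · refine Finset.sum_congr rfl fun ν _ => ?_
      have : (l.insertNth b ν : Fin (i + 1) → Fin n) ∘ l.succAbove = ν := by
        funext m; simp
      simp [Fin.insertNthEquiv, sym_insert a ha, this]
    · intro c _ hc
      simp [Fin.insertNthEquiv, hc]
    · simp
  rw [Finset.sum_congr rfl fun l _ => this l]
  simp [mul_assoc, Finset.mul_sum]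

lemma sum_cons {i : ℕ} (F : (Fin (i + 1) → Fin n) → ℝ) :
    ∑ ν, F ν = ∑ a : Fin n, ∑ ν : Fin i → Fin n, F (Fin.cons a ν) := by
  rw [← (Fin.consEquiv (fun _ => Fin n)).sum_comp, Fintype.sum_prod_type]
  rfl

lemma sm_Op {N : ℕ} {A : (i : ℕ) → (Fin i → Fin n) → (Fin n → ℝ) → ℝ}
    (hA : ∀ i < N, ∀ ν, Sm (A i ν)) {Ψ : (Fin n → ℝ) → ℝ} (h : Sm Ψ) : Sm (Op N A Ψ) := by
  unfold Op Sm
  exact ContDiff.sum fun i hi => ContDiff.sum fun ν _ =>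
    ContDiff.mul (hA i (Finset.mem_range.1 hi) ν) (sm_D h i ν)

/-- symbol derivative -/
noncomputable def G (A : (i : ℕ) → (Fin i → Fin n) → (Fin n → ℝ) → ℝ) (a : Fin n) :
    (i : ℕ) → (Fin i → Fin n) → (Fin n → ℝ) → ℝ :=
  fun i ν y => ((i : ℝ) + 1) * A (i + 1) (Fin.cons a ν) y

lemma Op_mul {N : ℕ} {A : (i : ℕ) → (Fin i → Fin n) → (Fin n → ℝ) → ℝ}
    (hA : ∀ i < N + 1, ∀ ν x (τ : Equiv.Perm (Fin i)), A i (ν ∘ τ) x = A i ν x)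
    {Ψ : (Fin n → ℝ) → ℝ} (h : Sm Ψ) (a : Fin n) (x : Fin n → ℝ) :
    Op (N + 1) A (fun y => y a * Ψ y) x = x a * Op (N + 1) A Ψ x + Op N (G A a) Ψ x := by
  unfold Op
  rw [Finset.sum_range_succ', Finset.sum_range_succ' _ N]
  simp_rw [D_mul_zero, D_mul h]
  have : ∀ i ∈ Finset.range N, ∑ ν : Fin (i + 1) → Fin n, A (i + 1) ν x *
      (x a * D (i + 1) ν Ψ x +
        ∑ l : Fin (i + 1), (if ν l = a then 1 else 0) * D i (ν ∘ l.succAbove) Ψ x) =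
      x a * ∑ ν : Fin (i + 1) → Fin n, A (i + 1) ν x * D (i + 1) ν Ψ x +
      ∑ ν : Fin i → Fin n, G A a i ν x * D i ν Ψ x := by
    intro i hi
    have hi' := Finset.mem_range.1 hi
    have h2 := sum_sym (fun ν => A (i + 1) ν x) (fun ν τ => hA (i + 1) (by omega) ν x τ) a
      (fun ν => D i ν Ψ x)
    unfold G
    rw [← h2, Finset.mul_sum, ← Finset.sum_add_distrib]
    exact Finset.sum_congr rfl fun ν _ => by ring
  rw [Finset.sum_congr rfl this, Finset.sum_add_distrib, mul_add, Finset.mul_sum, Finset.mul_sum]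
  have e : ∀ ν : Fin 0 → Fin n, A 0 ν x * (x a * D 0 ν Ψ x) = x a * (A 0 ν x * D 0 ν Ψ x) :=
    fun ν => by ring
  simp_rw [e]
  ring

/-- divergence of the coefficients -/
noncomputable def Dv (A : (i : ℕ) → (Fin i → Fin n) → (Fin n → ℝ) → ℝ) :
    (i : ℕ) → (Fin i → Fin n) → (Fin n → ℝ) → ℝ :=
  fun i ν y => ∑ a : Fin n, pd a (G A a i ν) y

lemma sm_G {N : ℕ} {A : (i : ℕ) → (Fin i → Fin n) → (Fin n → ℝ) → ℝ}
    (hA : ∀ i < N + 1, ∀ ν, Sm (A i ν)) (a : Fin n) : ∀ i < N, ∀ ν, Sm (G A a i ν) :=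
  fun i hi _ => ContDiff.mul contDiff_const (hA (i + 1) (by omega) _)

lemma div_G {N : ℕ} {A : (i : ℕ) → (Fin i → Fin n) → (Fin n → ℝ) → ℝ}
    (hA : ∀ i < N + 1, ∀ ν, Sm (A i ν))
    {Ψ : (Fin n → ℝ) → ℝ} (h : Sm Ψ) (x : Fin n → ℝ) :
    ∑ a, pd a (Op N (G A a) Ψ) x =
      Op N (Dv A) Ψ x + Op (N + 1) (fun i ν y => (i : ℝ) * A i ν y) Ψ x := by
  have h1 : ∀ a, pd a (Op N (G A a) Ψ) x = ∑ i ∈ Finset.range N, ∑ ν : Fin i → Fin n,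
      (pd a (G A a i ν) x * D i ν Ψ x + G A a i ν x * D (i + 1) (Fin.cons a ν : Fin (i+1) → Fin n) Ψ x) := by
    intro a
    have hs : ∀ i ∈ Finset.range N, ∀ ν ∈ (Finset.univ : Finset (Fin i → Fin n)),
        Sm (fun y => G A a i ν y * D i ν Ψ y) := fun i hi ν _ =>
      ContDiff.mul (sm_G hA a i (Finset.mem_range.1 hi) ν) (sm_D h i ν)
    unfold Op
    rw [pd_sum _ (fun i hi => ContDiff.sum (hs i hi))]
    refine Finset.sum_congr rfl fun i hi => ?_
    rw [pd_sum _ (hs i hi)]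
    refine Finset.sum_congr rfl fun ν _ => ?_
    rw [pd_mul (sm_G hA a i (Finset.mem_range.1 hi) ν) (sm_D h i ν), pd_D' h]
  rw [Finset.sum_congr rfl fun a _ => h1 a]
  unfold Op
  rw [Finset.sum_range_succ' _ N, Finset.sum_comm]
  simp only [Nat.cast_zero, zero_mul, Finset.sum_const_zero, add_zero]
  rw [← Finset.sum_add_distrib]
  refine Finset.sum_congr rfl fun i _ => ?_
  rw [sum_cons]
  simp_rw [Finset.sum_add_distrib]
  congr 1
  · rw [Finset.sum_comm]
    refine Finset.sum_congr rfl fun ν _ => ?_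
    rw [Dv, Finset.sum_mul]
  · simp [G]

lemma anti_cons {q : ℕ} (f : (Fin (q + 1) → Fin n) → ℝ)
    (hf : ∀ (μ : Fin (q + 1) → Fin n) (π : Equiv.Perm (Fin (q + 1))),
      f (μ ∘ π) = ((Equiv.Perm.sign π : ℤ) : ℝ) * f μ) (μ : Fin (q + 1) → Fin n)
    (j : Fin (q + 1)) :
    f (Fin.cons (μ j) (μ ∘ j.succAbove)) = (-1) ^ (j : ℕ) * f μ := by
  have e : (Fin.cons (μ j) (μ ∘ j.succAbove) : Fin (q + 1) → Fin n) ∘ j.cycleRange = μ := by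
    funext m
    refine Fin.succAboveCases j ?_ (fun m => ?_) m
    · simp
    · simp [Fin.cycleRange_succAbove]
  have h := hf (Fin.cons (μ j) (μ ∘ j.succAbove)) j.cycleRange
  rw [e, Fin.sign_cycleRange] at h
  rw [h, ← mul_assoc]
  push_cast
  rw [← mul_pow]
  simp

lemma perm_cons {i : ℕ} (a : Fin n) (ν : Fin i → Fin n) (τ : Equiv.Perm (Fin i)) :
    (Fin.cons a (ν ∘ τ) : Fin (i + 1) → Fin n) =
      (Fin.cons a ν : Fin (i + 1) → Fin n) ∘ (Equiv.Perm.decomposeFin.symm (0, τ)) := by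
  funext m
  refine Fin.cases ?_ (fun m => ?_) m <;> simp

lemma Op_congr {N : ℕ} {A B : (i : ℕ) → (Fin i → Fin n) → (Fin n → ℝ) → ℝ}
    {Ψ : (Fin n → ℝ) → ℝ} {x : Fin n → ℝ} (h : ∀ i < N, ∀ ν, A i ν x = B i ν x) :
    Op N A Ψ x = Op N B Ψ x :=
  Finset.sum_congr rfl fun i hi => Finset.sum_congr rfl fun ν _ => by
    rw [h i (Finset.mem_range.1 hi)]

lemma Op_add {N : ℕ} {A B : (i : ℕ) → (Fin i → Fin n) → (Fin n → ℝ) → ℝ}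
    {Ψ : (Fin n → ℝ) → ℝ} {x : Fin n → ℝ} :
    Op N (fun i ν y => A i ν y + B i ν y) Ψ x = Op N A Ψ x + Op N B Ψ x := by
  simp [Op, add_mul, Finset.sum_add_distrib]

lemma Op_smul {N : ℕ} {A : (i : ℕ) → (Fin i → Fin n) → (Fin n → ℝ) → ℝ} (c : ℝ)
    {Ψ : (Fin n → ℝ) → ℝ} {x : Fin n → ℝ} :
    Op N (fun i ν y => c * A i ν y) Ψ x = c * Op N A Ψ x := by
  simp [Op, mul_assoc, Finset.mul_sum]

lemma Op_sum {N : ℕ} {A : Fin n → (i : ℕ) → (Fin i → Fin n) → (Fin n → ℝ) → ℝ}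
    {Ψ : (Fin n → ℝ) → ℝ} {x : Fin n → ℝ} :
    Op N (fun i ν y => ∑ a, A a i ν y) Ψ x = ∑ a, Op N (A a) Ψ x := by
  unfold Op
  rw [Finset.sum_comm]
  refine Finset.sum_congr rfl fun i _ => ?_
  rw [Finset.sum_comm]
  refine Finset.sum_congr rfl fun ν _ => ?_
  rw [Finset.sum_mul]

lemma main (q : ℕ) (hpn : q + 1 < n) (N : ℕ) :
    ∀ (A : (Fin (q + 1) → Fin n) → (i : ℕ) → (Fin i → Fin n) → (Fin n → ℝ) → ℝ)
    (_ : ∀ i < N, ∀ μ ν, Sm (A μ i ν))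
    (_ : ∀ i < N, ∀ (μ : Fin (q + 1) → Fin n) (ν : Fin i → Fin n) (x : Fin n → ℝ)
      (π : Equiv.Perm (Fin (q + 1))),
      A (μ ∘ π) i ν x = ((Equiv.Perm.sign π : ℤ) : ℝ) * A μ i ν x)
    (_ : ∀ i < N, ∀ (μ : Fin (q + 1) → Fin n) (ν : Fin i → Fin n) (x : Fin n → ℝ)
      (τ : Equiv.Perm (Fin i)),
      A μ i (ν ∘ τ) x = A μ i ν x)
    (_ : ∀ Ψ : (Fin n → ℝ) → ℝ, Sm Ψ →
      ∀ (x : Fin n → ℝ) (μ : Fin (q + 2) → Fin n),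
        ∑ j : Fin (q + 2), (-1 : ℝ) ^ (j : ℕ) * pd (μ j) (Op N (A (μ ∘ j.succAbove)) Ψ) x = 0),
    ∃ B : (Fin q → Fin n) → (i : ℕ) → (Fin i → Fin n) → (Fin n → ℝ) → ℝ,
      (∀ i < N, ∀ σ ν, Sm (B σ i ν)) ∧
      (∀ i < N, ∀ (σ : Fin q → Fin n) (ν : Fin i → Fin n) (x : Fin n → ℝ)
        (π : Equiv.Perm (Fin q)),
        B (σ ∘ π) i ν x = ((Equiv.Perm.sign π : ℤ) : ℝ) * B σ i ν x) ∧
      (∀ i < N, ∀ (σ : Fin q → Fin n) (ν : Fin i → Fin n) (x : Fin n → ℝ)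
        (τ : Equiv.Perm (Fin i)),
        B σ i (ν ∘ τ) x = B σ i ν x) ∧
      (∀ Ψ : (Fin n → ℝ) → ℝ, Sm Ψ →
        ∀ (x : Fin n → ℝ) (μ : Fin (q + 1) → Fin n),
          Op N (A μ) Ψ x
            = ∑ j : Fin (q + 1), (-1 : ℝ) ^ (j : ℕ) *
                pd (μ j) (Op N (B (μ ∘ j.succAbove)) Ψ) x) := by
  induction N with
  | zero =>
    intro A _ _ _ _
    refine ⟨fun _ _ _ _ => 0, by simp, by simp, by simp, ?_⟩
    intro Ψ _ x μ
    have e : Op 0 (fun (i : ℕ) (_ : Fin i → Fin n) (_ : Fin n → ℝ) => (0 : ℝ)) Ψ = fun _ => 0 := by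
      funext y; simp [Op]
    simp only [e]
    simp [Op, pd]
  | succ N ih =>
    intro A hsm hanti hsym hcl
    obtain ⟨c, hc⟩ : ∃ c : ℝ, c = (N : ℝ) + (n - (q + 1)) := ⟨_, rfl⟩
    have hc0 : c ≠ 0 := by
      have h1 : ((q + 1 : ℕ) : ℝ) < n := by exact_mod_cast hpn
      have h2 : (0 : ℝ) ≤ N := Nat.cast_nonneg _
      push_cast at h1
      rw [hc]; apply ne_of_gt; linarith
    have smA : ∀ μ Ψ, Sm Ψ → Sm (Op (N + 1) (A μ) Ψ) := fun μ Ψ h =>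
      sm_Op (fun i hi ν => hsm i hi μ ν) h
    have smG' : ∀ μ a, ∀ i < N, ∀ ν, Sm (G (A μ) a i ν) := fun μ a =>
      sm_G (fun i hi ν => hsm i hi μ ν) a
    have smG : ∀ μ a Ψ, Sm Ψ → Sm (Op N (G (A μ) a) Ψ) := fun μ a Ψ h =>
      sm_Op (smG' μ a) h
    have smDv : ∀ μ, ∀ i < N, ∀ ν, Sm (Dv (A μ) i ν) := fun μ i hi ν =>
      ContDiff.sum fun a _ => Sm.pd (smG' μ a i hi ν) a
    -- closedness defect of the commutator
    have dg : ∀ Ψ, Sm Ψ → ∀ a (x : Fin n → ℝ) (μ : Fin (q + 2) → Fin n),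
        ∑ j : Fin (q + 2), (-1 : ℝ) ^ (j : ℕ) *
          pd (μ j) (Op N (G (A (μ ∘ j.succAbove)) a) Ψ) x =
        - ∑ j : Fin (q + 2), (-1 : ℝ) ^ (j : ℕ) *
          ((if μ j = a then 1 else 0) * Op (N + 1) (A (μ ∘ j.succAbove)) Ψ x) := by
      intro Ψ h a x μ
      have h1 := hcl _ (sm_mulc h a) x μ
      have h2 := hcl Ψ h x μ
      have e : ∀ j : Fin (q + 2),
          pd (μ j) (Op (N + 1) (A (μ ∘ j.succAbove)) (fun y => y a * Ψ y)) x =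
          ((if μ j = a then 1 else 0) * Op (N + 1) (A (μ ∘ j.succAbove)) Ψ x +
            x a * pd (μ j) (Op (N + 1) (A (μ ∘ j.succAbove)) Ψ) x) +
          pd (μ j) (Op N (G (A (μ ∘ j.succAbove)) a) Ψ) x := by
        intro j
        have : Op (N + 1) (A (μ ∘ j.succAbove)) (fun y => y a * Ψ y) =
            fun y => y a * Op (N + 1) (A (μ ∘ j.succAbove)) Ψ y +
              Op N (G (A (μ ∘ j.succAbove)) a) Ψ y := by
          funext y
          exact Op_mul (fun i hi ν x τ => hsym i hi _ ν x τ) h a y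
        rw [this, pd_add (ContDiff.mul (sm_coord a) (smA _ _ h)) (smG _ _ _ h),
          pd_mul (sm_coord a) (smA _ _ h), pd_coord]
      rw [Finset.sum_congr rfl fun j _ => by rw [e j]] at h1
      simp_rw [mul_add] at h1
      rw [Finset.sum_add_distrib, Finset.sum_add_distrib] at h1
      have h3 : ∑ j : Fin (q + 2), (-1 : ℝ) ^ (j : ℕ) *
          (x a * pd (μ j) (Op (N + 1) (A (μ ∘ j.succAbove)) Ψ) x) = 0 := by
        rw [← mul_zero (x a), ← h2, Finset.mul_sum]
        exact Finset.sum_congr rfl fun j _ => by ring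
      linarith
    -- the homotopy formula
    have hom : ∀ Ψ, Sm Ψ → ∀ (x : Fin n → ℝ) (μ : Fin (q + 1) → Fin n),
        ∑ j : Fin (q + 1), (-1 : ℝ) ^ (j : ℕ) *
          pd (μ j) (fun y => ∑ a, Op N (G (A (Fin.cons a (μ ∘ j.succAbove))) a) Ψ y) x =
        ∑ a, pd a (Op N (G (A μ) a) Ψ) x + ((n : ℝ) - (q + 1)) * Op (N + 1) (A μ) Ψ x := by
      intro Ψ h x μ
      have h1 : ∀ a : Fin n, ∑ j : Fin (q + 1), (-1 : ℝ) ^ (j : ℕ) *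
          pd (μ j) (Op N (G (A (Fin.cons a (μ ∘ j.succAbove))) a) Ψ) x =
          pd a (Op N (G (A μ) a) Ψ) x + Op (N + 1) (A μ) Ψ x -
          ∑ j : Fin (q + 1), (-1 : ℝ) ^ (j : ℕ) * ((if μ j = a then 1 else 0) *
            Op (N + 1) (A (Fin.cons a (μ ∘ j.succAbove))) Ψ x) := by
        intro a
        have h2 := dg Ψ h a x (Fin.cons a μ)
        rw [Fin.sum_univ_succ, Fin.sum_univ_succ (n := q + 1)] at h2
        have e0 : (Fin.cons a μ : Fin (q + 2) → Fin n) ∘ (0 : Fin (q + 2)).succAbove = μ := by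
          funext l; simp
        have e1 : ∀ j : Fin (q + 1), (Fin.cons a μ : Fin (q + 2) → Fin n) ∘ j.succ.succAbove =
            Fin.cons a (μ ∘ j.succAbove) := by
          intro j
          funext l
          refine Fin.cases ?_ (fun l => ?_) l
          · simp
          · simp [Fin.succ_succAbove_succ]
        simp only [e0, e1, Fin.cons_zero, Fin.cons_succ, Fin.val_zero, Fin.val_succ, pow_zero,
          pow_succ, one_mul, mul_neg, mul_one, neg_mul, Finset.sum_neg_distrib, if_true] at h2
        linarith
      have h3 : ∀ j : Fin (q + 1),
          pd (μ j) (fun y => ∑ a, Op N (G (A (Fin.cons a (μ ∘ j.succAbove))) a) Ψ y) x =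
          ∑ a, pd (μ j) (Op N (G (A (Fin.cons a (μ ∘ j.succAbove))) a) Ψ) x := fun j =>
        pd_sum _ (fun a _ => smG _ _ _ h) _ _
      simp_rw [h3, Finset.mul_sum]
      rw [Finset.sum_comm, Finset.sum_congr rfl fun a _ => h1 a, Finset.sum_sub_distrib,
        Finset.sum_add_distrib]
      have h4 : ∑ a : Fin n, ∑ j : Fin (q + 1), (-1 : ℝ) ^ (j : ℕ) *
          ((if μ j = a then 1 else 0) *
            Op (N + 1) (A (Fin.cons a (μ ∘ j.succAbove))) Ψ x) =
          ((q : ℝ) + 1) * Op (N + 1) (A μ) Ψ x := by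
        rw [Finset.sum_comm]
        have h5 : ∀ j : Fin (q + 1), ∑ a : Fin n, (-1 : ℝ) ^ (j : ℕ) *
          ((if μ j = a then 1 else 0) *
            Op (N + 1) (A (Fin.cons a (μ ∘ j.succAbove))) Ψ x) = Op (N + 1) (A μ) Ψ x := by
          intro j
          rw [Finset.sum_eq_single (μ j)]
          · rw [if_pos rfl, one_mul]
            rw [anti_cons (fun μ => Op (N + 1) (A μ) Ψ x) ?_ μ j, ← mul_assoc, ← mul_pow]
            · simp
            · intro μ π
              rw [← Op_smul]
              exact Op_congr fun i hi ν => hanti i hi μ ν x π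
          · intro b _ hb
            rw [if_neg (Ne.symm hb)]; simp
          · simp
        rw [Finset.sum_congr rfl fun j _ => h5 j]
        simp
      rw [h4]
      simp
      ring
    -- reduced operator
    let A' : (Fin (q + 1) → Fin n) → (i : ℕ) → (Fin i → Fin n) → (Fin n → ℝ) → ℝ :=
      fun μ i ν y => c⁻¹ * (((N : ℝ) - i) * A μ i ν y + (-1) * Dv (A μ) i ν y)
    have hA' : ∀ Ψ, Sm Ψ → ∀ μ x, Op N (A' μ) Ψ x =
        c⁻¹ * (N * Op (N + 1) (A μ) Ψ x - ∑ a, pd a (Op N (G (A μ) a) Ψ) x) := by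
      intro Ψ h μ x
      have e1 : Op N (A' μ) Ψ x = c⁻¹ * (Op N (fun i ν y => ((N : ℝ) - i) * A μ i ν y) Ψ x +
          (-1) * Op N (Dv (A μ)) Ψ x) := by
        simp only [A']
        rw [Op_smul, Op_add, Op_smul]
      have e2 : Op N (fun i ν y => ((N : ℝ) - i) * A μ i ν y) Ψ x =
          Op (N + 1) (fun i ν y => ((N : ℝ) - i) * A μ i ν y) Ψ x := by
        unfold Op
        rw [Finset.sum_range_succ]
        simp
      have e3 : Op (N + 1) (fun i ν y => ((N : ℝ) - i) * A μ i ν y) Ψ x =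
          N * Op (N + 1) (A μ) Ψ x + (-1) * Op (N + 1) (fun i ν y => (i : ℝ) * A μ i ν y) Ψ x := by
        rw [← Op_smul, ← Op_smul, ← Op_add]
        exact Op_congr fun i _ ν => by ring
      rw [e1, e2, e3, div_G (fun i hi ν => hsm i hi μ ν) h x]
      ring
    refine Exists.elim (ih A' ?_ ?_ ?_ ?_) ?_
    pick_goal 5
    · rintro B' ⟨hB1, hB2, hB3, hB4⟩
      let C : (Fin q → Fin n) → (i : ℕ) → (Fin i → Fin n) → (Fin n → ℝ) → ℝ :=
        fun σ i ν y => c⁻¹ * ∑ a, G (A (Fin.cons a σ)) a i ν y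
      let B : (Fin q → Fin n) → (i : ℕ) → (Fin i → Fin n) → (Fin n → ℝ) → ℝ :=
        fun σ i ν y => if i < N then C σ i ν y + B' σ i ν y else 0
      have smC : ∀ i < N, ∀ σ ν, Sm (C σ i ν) := fun i hi σ ν =>
        ContDiff.mul contDiff_const (ContDiff.sum fun a _ => smG' _ a i hi ν)
      refine ⟨B, ?_, ?_, ?_, ?_⟩
      · intro i _ σ ν
        by_cases hi : i < N
        · simp only [B, if_pos hi]
          exact ContDiff.add (smC i hi σ ν) (hB1 i hi σ ν)
        · simp only [B, if_neg hi]
          exact contDiff_const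
      · intro i _ σ ν x π
        by_cases hi : i < N
        · simp only [B, if_pos hi]
          rw [hB2 i hi, mul_add]
          congr 1
          simp only [C, G]
          rw [mul_left_comm, Finset.mul_sum (a := ((Equiv.Perm.sign π : ℤ) : ℝ))]
          congr 1
          refine Finset.sum_congr rfl fun a _ => ?_
          rw [perm_cons, hanti (i + 1) (by omega)]
          simp
          ring
        · simp [B, if_neg hi]
      · intro i _ σ ν x τ
        by_cases hi : i < N
        · simp only [B, if_pos hi]
          rw [hB3 i hi]
          congr 1
          simp only [C, G]
          congr 1
          refine Finset.sum_congr rfl fun a _ => ?_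
          rw [perm_cons, hsym (i + 1) (by omega)]
        · simp [B, if_neg hi]
      · intro Ψ h x μ
        have e1 : ∀ σ, Op (N + 1) (B σ) Ψ = fun y =>
            c⁻¹ * (∑ a, Op N (G (A (Fin.cons a σ)) a) Ψ y) + Op N (B' σ) Ψ y := by
          intro σ
          funext y
          have : Op (N + 1) (B σ) Ψ y = Op N (B σ) Ψ y := by
            unfold Op
            rw [Finset.sum_range_succ]
            simp [B]
          rw [this, ← Op_sum, ← Op_smul, ← Op_add]
          refine Op_congr fun i hi ν => ?_
          simp only [B, if_pos hi, C]
        have smS : ∀ σ : Fin q → Fin n, Sm (fun y =>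
            ∑ a, Op N (G (A (Fin.cons a σ)) a) Ψ y) := fun σ =>
          ContDiff.sum fun a _ => smG _ _ _ h
        have e2 : ∀ j : Fin (q + 1), pd (μ j) (Op (N + 1) (B (μ ∘ j.succAbove)) Ψ) x =
            c⁻¹ * pd (μ j) (fun y => ∑ a, Op N (G (A (Fin.cons a (μ ∘ j.succAbove))) a) Ψ y) x +
              pd (μ j) (Op N (B' (μ ∘ j.succAbove)) Ψ) x := by
          intro j
          rw [e1, pd_add (ContDiff.mul contDiff_const (smS _))
            (sm_Op (fun i hi ν => hB1 i hi _ ν) h), pd_const_mul _ (smS _)]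
        simp_rw [e2, mul_add]
        rw [Finset.sum_add_distrib, ← hB4 Ψ h x μ, hA' Ψ h]
        have h6 := hom Ψ h x μ
        have h7 : ∑ j : Fin (q + 1), (-1 : ℝ) ^ (j : ℕ) * (c⁻¹ *
          pd (μ j) (fun y => ∑ a, Op N (G (A (Fin.cons a (μ ∘ j.succAbove))) a) Ψ y) x) =
          c⁻¹ * (∑ a, pd a (Op N (G (A μ) a) Ψ) x +
            ((n : ℝ) - (q + 1)) * Op (N + 1) (A μ) Ψ x) := by
          rw [← h6, Finset.mul_sum]
          exact Finset.sum_congr rfl fun j _ => by ring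
        rw [h7, ← mul_add]
        rw [eq_inv_mul_iff_mul_eq₀ hc0, hc]
        ring
    · intro i hi μ ν
      exact ContDiff.mul contDiff_const (ContDiff.add
        (ContDiff.mul contDiff_const (hsm i (by omega) μ ν))
        (ContDiff.mul contDiff_const (smDv μ i hi ν)))
    · intro i hi μ ν x π
      have e : Dv (A (μ ∘ π)) i ν x = ((Equiv.Perm.sign π : ℤ) : ℝ) * Dv (A μ) i ν x := by
        unfold Dv
        rw [Finset.mul_sum]
        refine Finset.sum_congr rfl fun a _ => ?_
        rw [← pd_const_mul _ (smG' μ a i hi ν)]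
        congr 1
        funext y
        simp only [G]
        rw [hanti (i + 1) (by omega)]
        ring
      simp only [A']
      rw [e, hanti i (by omega)]
      ring
    · intro i hi μ ν x τ
      have e : Dv (A μ) i (ν ∘ τ) x = Dv (A μ) i ν x := by
        unfold Dv
        refine Finset.sum_congr rfl fun a _ => ?_
        congr 1
        funext y
        simp only [G]
        rw [perm_cons, hsym (i + 1) (by omega)]
      simp only [A']
      rw [e, hsym i (by omega)]
    · intro Ψ h x μ
      have smS : ∀ μ : Fin (q + 1) → Fin n, Sm (fun y => ∑ a, pd a (Op N (G (A μ) a) Ψ) y) :=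
        fun μ => ContDiff.sum fun a _ => Sm.pd (smG _ _ _ h) a
      have e1 : ∀ j : Fin (q + 2), pd (μ j) (Op N (A' (μ ∘ j.succAbove)) Ψ) x =
          c⁻¹ * (N * pd (μ j) (Op (N + 1) (A (μ ∘ j.succAbove)) Ψ) x -
            ∑ a, pd a (pd (μ j) (Op N (G (A (μ ∘ j.succAbove)) a) Ψ)) x) := by
        intro j
        have : Op N (A' (μ ∘ j.succAbove)) Ψ = fun y =>
            c⁻¹ * (N * Op (N + 1) (A (μ ∘ j.succAbove)) Ψ y -
              ∑ a, pd a (Op N (G (A (μ ∘ j.succAbove)) a) Ψ) y) := by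
          funext y; exact hA' Ψ h _ y
        rw [this, pd_const_mul _ (ContDiff.sub (ContDiff.mul contDiff_const (smA _ _ h)) (smS _)),
          pd_sub (ContDiff.mul contDiff_const (smA _ _ h)) (smS _), pd_const_mul _ (smA _ _ h),
          pd_sum _ (fun a _ => Sm.pd (smG _ _ _ h) a)]
        congr 2
        exact Finset.sum_congr rfl fun a _ => pd_comm (smG _ _ _ h) _ _ _
      have e2 : ∑ j : Fin (q + 2), (-1 : ℝ) ^ (j : ℕ) * pd (μ j) (Op N (A' (μ ∘ j.succAbove)) Ψ) x =
          c⁻¹ * (N * ∑ j : Fin (q + 2), (-1 : ℝ) ^ (j : ℕ) *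
              pd (μ j) (Op (N + 1) (A (μ ∘ j.succAbove)) Ψ) x -
            ∑ a, ∑ j : Fin (q + 2), (-1 : ℝ) ^ (j : ℕ) *
              pd a (pd (μ j) (Op N (G (A (μ ∘ j.succAbove)) a) Ψ)) x) := by
        rw [Finset.sum_comm, Finset.mul_sum, ← Finset.sum_sub_distrib, Finset.mul_sum]
        refine Finset.sum_congr rfl fun j _ => ?_
        rw [e1, ← Finset.mul_sum]
        ring
      have e3 : ∀ a, ∑ j : Fin (q + 2), (-1 : ℝ) ^ (j : ℕ) *
              pd a (pd (μ j) (Op N (G (A (μ ∘ j.succAbove)) a) Ψ)) x =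
          - ∑ j : Fin (q + 2), (-1 : ℝ) ^ (j : ℕ) *
          ((if μ j = a then 1 else 0) * pd a (Op (N + 1) (A (μ ∘ j.succAbove)) Ψ) x) := by
        intro a
        have f1 : pd a (fun y => ∑ j : Fin (q + 2), (-1 : ℝ) ^ (j : ℕ) *
            pd (μ j) (Op N (G (A (μ ∘ j.succAbove)) a) Ψ) y) x =
            ∑ j : Fin (q + 2), (-1 : ℝ) ^ (j : ℕ) *
              pd a (pd (μ j) (Op N (G (A (μ ∘ j.succAbove)) a) Ψ)) x := by
          rw [pd_sum _ (fun j _ => ContDiff.mul contDiff_const (Sm.pd (smG _ _ _ h) _))]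
          exact Finset.sum_congr rfl fun j _ => pd_const_mul _ (Sm.pd (smG _ _ _ h) _) _ _
        have f2 : (fun y => ∑ j : Fin (q + 2), (-1 : ℝ) ^ (j : ℕ) *
            pd (μ j) (Op N (G (A (μ ∘ j.succAbove)) a) Ψ) y) =
            fun y => ∑ j : Fin (q + 2), (-((-1 : ℝ) ^ (j : ℕ) * (if μ j = a then 1 else 0))) *
              Op (N + 1) (A (μ ∘ j.succAbove)) Ψ y := by
          funext y
          rw [dg Ψ h a y μ, ← Finset.sum_neg_distrib]
          exact Finset.sum_congr rfl fun j _ => by ring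
        rw [← f1, f2, pd_sum _ (fun j _ => ContDiff.mul contDiff_const (smA _ _ h)),
          ← Finset.sum_neg_distrib]
        refine Finset.sum_congr rfl fun j _ => ?_
        rw [pd_const_mul _ (smA _ _ h)]
        ring
      rw [e2, hcl Ψ h x μ, Finset.sum_congr rfl fun a _ => e3 a, Finset.sum_neg_distrib,
        Finset.sum_comm]
      have e4 : ∑ j : Fin (q + 2), ∑ a : Fin n, (-1 : ℝ) ^ (j : ℕ) *
          ((if μ j = a then 1 else 0) * pd a (Op (N + 1) (A (μ ∘ j.succAbove)) Ψ) x) = 0 := by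
        refine Eq.trans (Finset.sum_congr rfl fun j _ => ?_) (hcl Ψ h x μ)
        simp
      rw [e4]
      simp

end APL


/-- the linear-in-the-field case of the Algebraic Poincaré Lemma on
`ℝ^n`. We write the form degree as `p = q + 1` (so `1 ≤ p < n`). If the `p`-form
`α[Ψ]_{μ_1…μ_p} = Σ_{i=0}^k A^i{}_{μ_1…μ_p}{}^{ν_1…ν_i} ∂_{ν_1}⋯∂_{ν_i}Ψ` is closed
for every smooth `Ψ`, then there are smooth coefficient fields `B^i`, antisymmetric
in their `p-1` lower indices and symmetric in their upper indices, such that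
`α[Ψ] = d(β[Ψ])` for every `Ψ`, where
`β[Ψ]_{μ_2…μ_p} = Σ_i B^i{}_{μ_2…μ_p}{}^{ν_1…ν_i} ∂_{ν_1}⋯∂_{ν_i}Ψ`. -/
theorem algebraic_poincare_lemma_linear
    (n q k : ℕ) (hn : 2 ≤ n) (hpn : q + 1 < n)
    (A : (i : ℕ) → (Fin (q + 1) → Fin n) → (Fin i → Fin n) → (Fin n → ℝ) → ℝ)
    (hAsmooth : ∀ i ≤ k, ∀ (μ : Fin (q + 1) → Fin n) (ν : Fin i → Fin n),
      ContDiff ℝ (⊤ : ℕ∞) (A i μ ν))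
    (hAanti : ∀ i ≤ k, ∀ (μ : Fin (q + 1) → Fin n) (ν : Fin i → Fin n) (x : Fin n → ℝ)
      (π : Equiv.Perm (Fin (q + 1))),
      A i (μ ∘ π) ν x = ((Equiv.Perm.sign π : ℤ) : ℝ) * A i μ ν x)
    (hAsym : ∀ i ≤ k, ∀ (μ : Fin (q + 1) → Fin n) (ν : Fin i → Fin n) (x : Fin n → ℝ)
      (τ : Equiv.Perm (Fin i)),
      A i μ (ν ∘ τ) x = A i μ ν x)
    (hclosed : ∀ Ψ : (Fin n → ℝ) → ℝ, ContDiff ℝ (⊤ : ℕ∞) Ψ →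
      ∀ (x : Fin n → ℝ) (μ : Fin (q + 2) → Fin n),
        ∑ j : Fin (q + 2), (-1 : ℝ) ^ (j : ℕ) *
          fderiv ℝ (fun y : Fin n → ℝ =>
              ∑ i ∈ Finset.range (k + 1), ∑ ν : Fin i → Fin n,
                A i (μ ∘ j.succAbove) ν y *
                  iteratedFDeriv ℝ i Ψ y (fun l : Fin i => Pi.single (ν l) (1 : ℝ)))
            x (Pi.single (μ j) (1 : ℝ)) = 0) :
    ∃ B : (i : ℕ) → (Fin q → Fin n) → (Fin i → Fin n) → (Fin n → ℝ) → ℝ,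
      (∀ i ≤ k, ∀ (σ : Fin q → Fin n) (ν : Fin i → Fin n),
        ContDiff ℝ (⊤ : ℕ∞) (B i σ ν)) ∧
      (∀ i ≤ k, ∀ (σ : Fin q → Fin n) (ν : Fin i → Fin n) (x : Fin n → ℝ)
        (π : Equiv.Perm (Fin q)),
        B i (σ ∘ π) ν x = ((Equiv.Perm.sign π : ℤ) : ℝ) * B i σ ν x) ∧
      (∀ i ≤ k, ∀ (σ : Fin q → Fin n) (ν : Fin i → Fin n) (x : Fin n → ℝ)
        (τ : Equiv.Perm (Fin i)),
        B i σ (ν ∘ τ) x = B i σ ν x) ∧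
      (∀ Ψ : (Fin n → ℝ) → ℝ, ContDiff ℝ (⊤ : ℕ∞) Ψ →
        ∀ (x : Fin n → ℝ) (μ : Fin (q + 1) → Fin n),
          (∑ i ∈ Finset.range (k + 1), ∑ ν : Fin i → Fin n,
              A i μ ν x * iteratedFDeriv ℝ i Ψ x (fun l : Fin i => Pi.single (ν l) (1 : ℝ)))
            = ∑ j : Fin (q + 1), (-1 : ℝ) ^ (j : ℕ) *
                fderiv ℝ (fun y : Fin n → ℝ =>
                    ∑ i ∈ Finset.range (k + 1), ∑ ν : Fin i → Fin n,
                      B i (μ ∘ j.succAbove) ν y *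
                        iteratedFDeriv ℝ i Ψ y (fun l : Fin i => Pi.single (ν l) (1 : ℝ)))
                  x (Pi.single (μ j) (1 : ℝ))) := by
  obtain ⟨B, h1, h2, h3, h4⟩ := APL.main (n := n) q hpn (k + 1) (fun μ i ν y => A i μ ν y)
    (fun i hi => hAsmooth i (by omega)) (fun i hi => hAanti i (by omega))
    (fun i hi => hAsym i (by omega)) hclosed
  exact ⟨fun i σ ν y => B σ i ν y, fun i hi => h1 i (by omega), fun i hi => h2 i (by omega),
    fun i hi => h3 i (by omega), h4⟩
end
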